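/- arXiv:2404.06959 — 2 statements merged into one kernel-verified Lean document; each statement's English description precedes it below -/
import Mathlib

section
/- Let B ⊂ A be a regular inclusion of simple unital C*-algebras with a finite-index conditional expectation, and let E₀ : A → B be the minimal conditional expectation. Then the centralizer C_A(B) is finite-dimensional, E₀ maps C_A(B) into ℂ·1, and the functional τ₀ on C_A(B) determined by E₀(z) = τ₀(z)·1 is a faithful tracial state which is the Markov trace for the inclusion ℂ ⊆ C_A(B) with modulus dim_ℂ C_A(B): τ₀(p)·dim_ℂ(C_A(B)) = dim_ℂ(p·C_A(B)) for every minimal central projection p of C_A(B). -/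
/-!
Everything rests on the first-order condition for minimality of the index. If `a` is a self-adjoint
element of the centralizer and `k = 1 + t a`, then `E₀ (k · k)`, normalised by `E₀ (k²)`, is again a
finite-index expectation onto `B`. Its index has a minimum at `t = 0`, so its derivative vanishes
there, which says that `∑ lᵢ z lᵢ* = r E₀ z` for every `z` in the centralizer, where `l` is a
quasi-basis and `r` the index (`Balanced`, `balanced_of_minimal`). Both sides are scalars, because
simple unital C*-algebras have trivial centre (`scalar_of_central`).

* Traciality (`Balanced.central`). The modular map `θ` on the centralizer, determined by
  `E₀ (x z) = E₀ (θ z x)`, is positive for the inner product given by `E₀`, and the balance condition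
  makes it an involution; hence `θ = id` and `E₀ (x z) = E₀ (z x)`. Faithfulness holds for every
  finite-index expectation (`IsCondExp.faithful`).
* Finite dimensionality (`finiteDimensional_cent`). Bessel's inequality applied to the quasi-basis
  shows that an orthonormal family in the centralizer has at most `r` members.
* Markov property (`markov`). A balanced expectation is unique (`Balanced.unique`), so `E₀` commutes
  with conjugation by every normalizing unitary (`minimal_conj`). Therefore all conjugates `u p u*` of
  a minimal central projection `p` have the same trace and the same block dimension. Distinct
  conjugates are orthogonal, so there are finitely many of them, and their sum commutes with the
  normalizer. By regularity the sum is central in `A`, and by simplicity it equals `1`. With `N`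
  conjugates this gives `N τ₀(p) = 1` and `dim C = N dim (p C)`.
-/

namespace RegularInclusion

variable {A : Type*} [NormedRing A] [StarRing A] [CStarRing A] [CompleteSpace A]
  [NormedAlgebra ℂ A] [StarModule ℂ A]

/-- A conditional expectation of `A` onto the subset `B`: a `ℂ`-linear positive
`B`-bimodular projection of `A` onto `B`. -/
def IsCondExp (B : Set A) (E : A →ₗ[ℂ] A) : Prop :=
  (∀ x, E x ∈ B) ∧ (∀ b ∈ B, E b = b) ∧
  (∀ x, ∃ y, E (star x * x) = star y * y) ∧
  (∀ b₁ ∈ B, ∀ b₂ ∈ B, ∀ x, E (b₁ * x * b₂) = b₁ * E x * b₂)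

/-- `l` is a right quasi-basis for `E`, witnessing finite index. -/
def IsRightQB (E : A →ₗ[ℂ] A) {n : ℕ} (l : Fin n → A) : Prop :=
  ∀ x, x = ∑ i, E (x * l i) * star (l i)

/-- The centralizer (relative commutant) `C_A(B)` of `B` in `A`. -/
def cent (B : Set A) : Set A := {x | ∀ b ∈ B, x * b = b * x}

/-- The normalizer `N_A(B) = {u ∈ U(A) : uBu* = B}` of `B` in `A`. -/
def normalizer (B : Set A) : Set A :=
  {u | u ∈ unitary A ∧ (fun x => u * x * star u) '' B = B}

/-- The set `U(B)` of unitaries of `B`. -/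
def UB (B : Set A) : Set A := {b | b ∈ B ∧ b ∈ unitary A}

/-- The set `U(B)·U(C_A(B))` of products of a unitary of `B` and a unitary of
the centralizer of `B`. -/
def UBC (B : Set A) : Set A :=
  {x | ∃ b c, b ∈ B ∧ b ∈ unitary A ∧ c ∈ cent B ∧ c ∈ unitary A ∧ x = b * c}

/-- Simplicity of the C*-algebra (given as the subset `S` of `A`): the only closed
two-sided ideals of `S` are `{0}` and `S`. -/
def IsSimpleCStar (S : Set A) : Prop :=
  ∀ I : Set A, I ⊆ S → IsClosed I → (0 : A) ∈ I →
    (∀ x ∈ I, ∀ y ∈ I, x + y ∈ I) →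
    (∀ x ∈ I, ∀ b ∈ S, x * b ∈ I ∧ b * x ∈ I) →
    I = {0} ∨ I = S

/-- The intermediate C*-subalgebra `C := C*(B ∪ C_A(B))` generated by `B` and the
centralizer of `B`. -/
def genC (B : Set A) : StarSubalgebra ℂ A :=
  (StarAlgebra.adjoin ℂ (B ∪ cent B)).topologicalClosure

/-- Regularity of the inclusion `B ⊆ A`: the normalizer of `B` generates `A` as a
C*-algebra. -/
def IsRegular (B : Set A) : Prop :=
  (StarAlgebra.adjoin ℂ (normalizer B)).topologicalClosure = ⊤

/-- `E₀` is the minimal conditional expectation of `A` onto `B`: the finite-index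
conditional expectation whose (scalar) Watatani index is least among all finite-index
conditional expectations onto `B`. -/
def IsMinimalCondExp (B : Set A) (E₀ : A →ₗ[ℂ] A) : Prop :=
  IsCondExp B E₀ ∧
  ∃ (r₀ : ℝ) (n : ℕ) (l : Fin n → A), IsRightQB E₀ l ∧
    (∑ i, l i * star (l i)) = (r₀ : ℂ) • 1 ∧
    ∀ E : A →ₗ[ℂ] A, IsCondExp B E → ∀ (m : ℕ) (μ : Fin m → A), IsRightQB E μ →
      ∀ r : ℝ, (∑ i, μ i * star (μ i)) = (r : ℂ) • 1 → r₀ ≤ r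

/-- The centralizer of `B` in `A`, as a `ℂ`-submodule of `A`. -/
def centSubmodule (B : Set A) : Submodule ℂ A where
  carrier := cent B
  zero_mem' := by intro b _; simp
  add_mem' := by
    intro x y hx hy b hb
    rw [add_mul, mul_add, hx b hb, hy b hb]
  smul_mem' := by
    intro c x hx b hb
    rw [smul_mul_assoc, mul_smul_comm, hx b hb]

/-- A minimal central projection of (the C*-algebra given by the subset) `S`. -/
def IsMinCentralProjIn (S : Set A) (p : A) : Prop :=
  p ∈ S ∧ p ≠ 0 ∧ p * p = p ∧ star p = p ∧ (∀ x ∈ S, p * x = x * p) ∧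
  ∀ q ∈ S, q * q = q → star q = q → (∀ x ∈ S, q * x = x * q) → q * p = q → q = 0 ∨ q = p

set_option linter.unusedSectionVars false

/-! ### Positive elements -/

/-- Positivity of an element of a C*-algebra, in the form `y* y` used by `IsCondExp`. -/
def IsPos (x : A) : Prop := ∃ y, x = star y * y

/-- The bundled C*-algebra structure assembled from the unbundled instances on `A`. -/
abbrev cstarOf (A : Type*) [NormedRing A] [StarRing A] [CStarRing A] [CompleteSpace A]
    [NormedAlgebra ℂ A] [StarModule ℂ A] : CStarAlgebra A where

lemma IsPos.add {x y : A} (hx : IsPos x) (hy : IsPos y) : IsPos (x + y) := by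
  let _ := cstarOf A
  let _ := CStarAlgebra.spectralOrder A
  have := CStarAlgebra.spectralOrderedRing A
  have hx' : 0 ≤ x := CStarAlgebra.nonneg_iff_eq_star_mul_self.2 hx
  have hy' : 0 ≤ y := CStarAlgebra.nonneg_iff_eq_star_mul_self.2 hy
  exact CStarAlgebra.nonneg_iff_eq_star_mul_self.1 (add_nonneg hx' hy')

lemma IsPos.antisymm {x : A} (hx : IsPos x) (hy : IsPos (-x)) : x = 0 := by
  let _ := cstarOf A
  let _ := CStarAlgebra.spectralOrder A
  have := CStarAlgebra.spectralOrderedRing A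
  have hx' : 0 ≤ x := CStarAlgebra.nonneg_iff_eq_star_mul_self.2 hx
  have hy' : 0 ≤ -x := CStarAlgebra.nonneg_iff_eq_star_mul_self.2 hy
  exact le_antisymm (neg_nonneg.1 hy') hx'

lemma IsPos.zero : IsPos (0 : A) := ⟨0, by simp⟩

lemma IsPos.sum {ι : Type*} (s : Finset ι) (f : ι → A) (h : ∀ i ∈ s, IsPos (f i)) :
    IsPos (∑ i ∈ s, f i) :=
  Finset.sum_induction f IsPos (fun _ _ => IsPos.add) IsPos.zero h

lemma IsPos.smul {x : A} (hx : IsPos x) {r : ℝ} (hr : 0 ≤ r) : IsPos ((r : ℂ) • x) := by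
  obtain ⟨y, rfl⟩ := hx
  refine ⟨((Real.sqrt r : ℝ) : ℂ) • y, ?_⟩
  rw [star_smul, smul_mul_smul_comm]
  congr 1
  rw [Complex.star_def, Complex.conj_ofReal, ← Complex.ofReal_mul, Real.mul_self_sqrt hr]

/-- If `b* b` stays below a fixed element after scaling by every `n`, then `b = 0`. -/
lemma eq_zero_of_archimedean {e b : A}
    (h : ∀ n : ℕ, IsPos (e - (n : ℂ) • (star b * b))) : b = 0 := by
  let _ := cstarOf A
  let _ := CStarAlgebra.spectralOrder A
  have := CStarAlgebra.spectralOrderedRing A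
  have key : ∀ n : ℕ, (n : ℝ) * ‖star b * b‖ ≤ ‖e‖ := by
    intro n
    have h1 : 0 ≤ e - (n : ℂ) • (star b * b) :=
      CStarAlgebra.nonneg_iff_eq_star_mul_self.2 (h n)
    have h2 : 0 ≤ (n : ℂ) • (star b * b) :=
      CStarAlgebra.nonneg_iff_eq_star_mul_self.2
        (show IsPos _ by
          simpa using IsPos.smul (⟨b, rfl⟩ : IsPos (star b * b)) (Nat.cast_nonneg n))
    have h3 := CStarAlgebra.norm_le_norm_of_nonneg_of_le h2 (sub_nonneg.1 h1)
    rwa [norm_smul, Complex.norm_natCast] at h3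
  by_contra hb
  have hpos : 0 < ‖star b * b‖ :=
    norm_pos_iff.2 fun h0 => hb ((CStarRing.star_mul_self_eq_zero_iff b).1 h0)
  obtain ⟨n, hn⟩ := exists_nat_gt (‖e‖ / ‖star b * b‖)
  have := (div_lt_iff₀ hpos).1 hn
  linarith [key n]

lemma IsPos.star_eq {x : A} (hx : IsPos x) : star x = x := by
  obtain ⟨y, rfl⟩ := hx
  simp

lemma IsPos.self_mul_star (y : A) : IsPos (y * star y) := ⟨star y, by simp⟩

/-- A positive scalar multiple of `1` has a nonnegative real coefficient. -/
lemma IsPos.coeff [Nontrivial A] {c : ℂ} (h : IsPos (c • (1 : A))) : ∃ r : ℝ, 0 ≤ r ∧ c = r := by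
  have hs := h.star_eq
  rw [star_smul, star_one] at hs
  have hc : star c = c := smul_left_injective ℂ (one_ne_zero (α := A)) hs
  obtain ⟨r, rfl⟩ := Complex.conj_eq_iff_real.1 hc
  refine ⟨r, ?_, rfl⟩
  by_contra hr
  push Not at hr
  have h2 : IsPos (-((r : ℂ) • (1 : A))) := by
    have := IsPos.smul (⟨1, by simp⟩ : IsPos (1 : A)) (neg_nonneg.2 hr.le)
    simpa using this
  have h3 := h.antisymm h2
  rw [smul_eq_zero] at h3
  rcases h3 with h3 | h3
  · exact hr.ne (by exact_mod_cast h3)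
  · exact one_ne_zero h3

/-! ### Centres of simple C*-algebras -/

/-- A simple unital C*-algebra has trivial centre: for `λ` in the spectrum of a central `z`, the
closure of `(z - λ) S` is a closed ideal, and it is proper because `1` has a neighbourhood of
invertible elements. -/
lemma scalar_of_central [Nontrivial A] (S : StarSubalgebra ℂ A) (hS : IsClosed (S : Set A))
    (hsimple : IsSimpleCStar (S : Set A)) {z : A} (hz : z ∈ S)
    (hcomm : ∀ b ∈ S, z * b = b * z) : ∃ c : ℂ, z = c • (1 : A) := by
  obtain ⟨c, hc⟩ := spectrum.nonempty z
  set w := z - c • (1 : A) with hw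
  have hwS : w ∈ S := S.sub_mem hz (S.smul_mem S.one_mem c)
  have hwcomm : ∀ b ∈ S, w * b = b * w := by
    intro b hb
    simp [hw, sub_mul, mul_sub, hcomm b hb]
  have hnu : ¬ IsUnit w := by
    intro hu
    apply hc
    rw [spectrum.mem_resolventSet_iff, Algebra.algebraMap_eq_smul_one, ← neg_sub]
    exact hu.neg
  let I : Set A := closure ((fun b => w * b) '' (S : Set A))
  have hsub : (fun b => w * b) '' (S : Set A) ⊆ S := by
    rintro _ ⟨b, hb, rfl⟩
    exact S.mul_mem hwS hb
  have hI := hsimple I (closure_minimal hsub hS) isClosed_closure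
    (subset_closure ⟨0, S.zero_mem, by simp⟩)
    (by
      intro x hx y hy
      refine map_mem_closure₂ continuous_add hx hy ?_
      rintro _ ⟨a, ha, rfl⟩ _ ⟨b, hb, rfl⟩
      exact ⟨a + b, S.add_mem ha hb, mul_add _ _ _⟩)
    (by
      intro x hx b hb
      constructor
      · refine map_mem_closure (f := fun y => y * b) (continuous_mul_const b) hx ?_
        rintro _ ⟨a, ha, rfl⟩
        exact ⟨a * b, S.mul_mem ha hb, by simp [mul_assoc]⟩
      · refine map_mem_closure (f := fun y => b * y) (continuous_const_mul b) hx ?_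
        rintro _ ⟨a, ha, rfl⟩
        exact ⟨b * a, S.mul_mem hb ha, by simp only [← mul_assoc, hwcomm b hb]⟩)
  rcases hI with hI | hI
  · have : w ∈ I := subset_closure ⟨1, S.one_mem, by simp⟩
    rw [hI] at this
    exact ⟨c, sub_eq_zero.1 this⟩
  · exfalso
    have h1 : (1 : A) ∈ I := by rw [hI]; exact S.one_mem
    obtain ⟨y, hy1, b, hb, rfl⟩ := mem_closure_iff.1 h1 {x : A | IsUnit x} Units.isOpen isUnit_one
    exact hnu ((Commute.isUnit_mul_iff (hwcomm b hb)).1 hy1).1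

/-! ### Conditional expectations and quasi-bases -/

section CondExp

variable {B : StarSubalgebra ℂ A} {E : A →ₗ[ℂ] A}

lemma IsCondExp.mem (hE : IsCondExp (B : Set A) E) (x : A) : E x ∈ B := hE.1 x

lemma IsCondExp.map_one (hE : IsCondExp (B : Set A) E) : E 1 = 1 := hE.2.1 1 B.one_mem

lemma IsCondExp.left (hE : IsCondExp (B : Set A) E) {b : A} (hb : b ∈ B) (x : A) :
    E (b * x) = b * E x := by
  simpa using hE.2.2.2 b hb 1 B.one_mem x

lemma IsCondExp.right (hE : IsCondExp (B : Set A) E) {b : A} (hb : b ∈ B) (x : A) :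
    E (x * b) = E x * b := by
  simpa using hE.2.2.2 1 B.one_mem b hb x

lemma IsCondExp.pos (hE : IsCondExp (B : Set A) E) (x : A) : IsPos (E (star x * x)) :=
  hE.2.2.1 x

lemma IsCondExp.pos' (hE : IsCondExp (B : Set A) E) (x : A) : IsPos (E (x * star x)) := by
  simpa using hE.pos (star x)

/-- Every self-adjoint `a` satisfies `4a = (1+a)*(1+a) - (1-a)*(1-a)`, so positivity of `E` makes
`E a` self-adjoint. -/
lemma IsCondExp.selfAdjoint (hE : IsCondExp (B : Set A) E) {a : A} (ha : star a = a) :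
    star (E a) = E a := by
  have h4 : (4 : ℂ) • a = star (1 + a) * (1 + a) - star (1 - a) * (1 - a) := by
    rw [star_add, star_sub, star_one, ha]
    have : (4 : ℂ) • a = a + a + a + a := by module
    rw [this]
    noncomm_ring
  have h : (4 : ℂ) • E a = E (star (1 + a) * (1 + a)) - E (star (1 - a) * (1 - a)) := by
    rw [← map_smul, h4, map_sub]
  have h' : star ((4 : ℂ) • E a) = (4 : ℂ) • E a := by
    rw [h, star_sub, (hE.pos _).star_eq, (hE.pos _).star_eq]
  rw [star_smul] at h'
  have h5 : star (4 : ℂ) = 4 := by simp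
  rw [h5] at h'
  exact smul_right_injective A (by norm_num : (4 : ℂ) ≠ 0) h'

/-- Decomposition into real and imaginary parts. -/
lemma exists_re_im (x : A) : ∃ a b : A, star a = a ∧ star b = b ∧ x = a + Complex.I • b ∧
    (∀ S : StarSubalgebra ℂ A, x ∈ S → a ∈ S ∧ b ∈ S) := by
  refine ⟨(2⁻¹ : ℂ) • (x + star x), (-(2⁻¹ : ℂ) * Complex.I) • (x - star x), ?_, ?_, ?_, ?_⟩
  · simp [add_comm]
  · rw [star_smul, star_sub, star_star]
    simp only [Complex.star_def, map_mul, map_neg, Complex.conj_I, map_inv₀, map_ofNat]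
    module
  · rw [smul_smul]
    have : Complex.I * (-(2⁻¹ : ℂ) * Complex.I) = 2⁻¹ := by
      linear_combination (-(2⁻¹ : ℂ)) * Complex.I_mul_I
    rw [this]
    module
  · intro S hx
    exact ⟨S.smul_mem (add_mem hx (star_mem hx)) _, S.smul_mem (sub_mem hx (star_mem hx)) _⟩

lemma IsCondExp.map_star (hE : IsCondExp (B : Set A) E) (x : A) : E (star x) = star (E x) := by
  obtain ⟨a, b, ha, hb, rfl, -⟩ := exists_re_im x
  simp only [star_add, star_smul, ha, hb, map_add, map_smul, hE.selfAdjoint ha, hE.selfAdjoint hb]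

variable {n : ℕ} {l : Fin n → A}

lemma IsRightQB.right (hl : IsRightQB E l) (x : A) : ∑ i, E (x * l i) * star (l i) = x :=
  (hl x).symm

lemma IsRightQB.left (hE : IsCondExp (B : Set A) E) (hl : IsRightQB E l) (x : A) :
    ∑ i, l i * E (star (l i) * x) = x := by
  have h := congrArg star (hl.right (star x))
  simp only [star_sum, star_mul, star_star] at h
  rw [← h]
  refine Finset.sum_congr rfl fun i _ => ?_
  rw [← hE.map_star]
  simp [h]

/-- `E` is nondegenerate. -/
lemma IsRightQB.eq_zero (hl : IsRightQB E l) {y : A} (h : ∀ x, E (y * x) = 0) : y = 0 := by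
  rw [← hl.right y]
  simp [h]

lemma IsRightQB.ext (hl : IsRightQB E l) {y z : A} (h : ∀ x, E (y * x) = E (z * x)) : y = z := by
  rw [← sub_eq_zero]
  refine hl.eq_zero fun x => ?_
  rw [sub_mul, map_sub, h, sub_self]

/-- A finite-index conditional expectation is faithful: by the Cauchy–Schwarz argument, `E (x* x) = 0`
forces `E (x* y) = 0` for every `y`, and `E` is nondegenerate. -/
lemma IsCondExp.faithful (hE : IsCondExp (B : Set A) E) (hl : IsRightQB E l) {x : A}
    (hx : E (star x * x) = 0) : x = 0 := by
  have h0 : star x = 0 := by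
    refine hl.eq_zero fun y => ?_
    set b := E (star x * y) with hb
    have hbB : b ∈ B := hE.mem _
    have hb' : E (star y * x) = star b := by rw [hb, ← hE.map_star]; simp
    refine eq_zero_of_archimedean (e := E (star y * y)) fun n => ?_
    -- expand `E ((y - (n/2) x b)* (y - (n/2) x b))`
    have h := hE.pos (y - ((n : ℂ) / 2) • (x * b))
    have hs : star ((n : ℂ) / 2) = (n : ℂ) / 2 := by simp
    have e1 : star (y - ((n : ℂ) / 2) • (x * b)) * (y - ((n : ℂ) / 2) • (x * b)) =
        star y * y - ((n : ℂ) / 2) • (star y * x * b) - ((n : ℂ) / 2) • (star b * (star x * y))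
          + ((n : ℂ) / 2 * ((n : ℂ) / 2)) • (star b * (star x * x) * b) := by
      rw [star_sub, star_smul, hs, star_mul]
      simp only [sub_mul, mul_sub, smul_mul_assoc, mul_smul_comm, smul_smul, mul_assoc, smul_sub]
      abel
    rw [e1] at h
    simp only [map_add, map_sub, map_smul, hE.right hbB, hE.left (star_mem hbB), hb', hx,
      ← hb, mul_zero, zero_mul, smul_zero, add_zero] at h
    convert h using 1
    module
  simpa using h0

lemma IsCondExp.faithful' (hE : IsCondExp (B : Set A) E) (hl : IsRightQB E l) {x : A}
    (hx : E (x * star x) = 0) : x = 0 := by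
  have := hE.faithful hl (x := star x) (by simpa using hx)
  simpa using this

/-! ### The centralizer -/

/-- The centralizer of `B` as a unital `*`-subalgebra. -/
def centAlg (B : StarSubalgebra ℂ A) : StarSubalgebra ℂ A := StarSubalgebra.centralizer ℂ (B : Set A)

lemma mem_centAlg {z : A} : z ∈ centAlg B ↔ z ∈ cent (B : Set A) := by
  unfold centAlg
  rw [StarSubalgebra.mem_centralizer_iff]
  constructor
  · intro h b hb
    exact (h b hb).1.symm
  · intro h b hb
    exact ⟨(h b hb).symm, (h _ (star_mem hb)).symm⟩

lemma centAlg.comm {z : A} (hz : z ∈ centAlg B) {b : A} (hb : b ∈ B) : z * b = b * z :=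
  mem_centAlg.1 hz b hb

lemma IsCondExp.map_cent [Nontrivial A] (hE : IsCondExp (B : Set A) E)
    (hBclosed : IsClosed (B : Set A)) (hBsimple : IsSimpleCStar (B : Set A))
    {z : A} (hz : z ∈ centAlg B) : ∃ c : ℂ, E z = c • (1 : A) := by
  refine scalar_of_central B hBclosed hBsimple (hE.mem z) fun b hb => ?_
  rw [← hE.right hb, ← hE.left hb, centAlg.comm hz hb]

/-- `z ↦ ∑ lᵢ z lᵢ*` maps the centralizer of `B` into the centre of `A`. -/
lemma sigma_comm (hE : IsCondExp (B : Set A) E) (hl : IsRightQB E l) {z : A}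
    (hz : z ∈ centAlg B) (a : A) :
    (∑ i, l i * z * star (l i)) * a = a * ∑ i, l i * z * star (l i) := by
  have h1 : a * ∑ i, l i * z * star (l i) =
      ∑ i, ∑ j, l j * E (star (l j) * (a * l i)) * z * star (l i) := by
    rw [Finset.mul_sum]
    refine Finset.sum_congr rfl fun i _ => ?_
    rw [← Finset.sum_mul, ← Finset.sum_mul, hl.left hE, mul_assoc, mul_assoc, mul_assoc]
  rw [h1, Finset.sum_comm, Finset.sum_mul]
  refine Finset.sum_congr rfl fun j _ => ?_
  rw [mul_assoc, ← hl.right (star (l j) * a), Finset.mul_sum]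
  refine Finset.sum_congr rfl fun i _ => ?_
  simp only [mul_assoc]
  rw [← mul_assoc z, centAlg.comm hz (hE.mem _), mul_assoc]

lemma sigma_scalar [Nontrivial A] (hAsimple : IsSimpleCStar (Set.univ : Set A))
    (hE : IsCondExp (B : Set A) E) (hl : IsRightQB E l) {z : A} (hz : z ∈ centAlg B) :
    ∃ c : ℂ, ∑ i, l i * z * star (l i) = c • (1 : A) :=
  scalar_of_central ⊤ (by simp) (by simpa using hAsimple) (by simp)
    fun b _ => sigma_comm hE hl hz b

/-- Two expectations are compared through a Radon–Nikodym type element of the centralizer. -/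
lemma exists_radonNikodym (hE : IsCondExp (B : Set A) E) (hl : IsRightQB E l)
    (F : A →ₗ[ℂ] A) (hFr : ∀ b ∈ B, ∀ x, F (x * b) = F x * b)
    (hFl : ∀ b ∈ B, ∀ x, F (b * x) = b * F x) (hFB : ∀ x, F x ∈ B) :
    ∃ h ∈ centAlg B, ∀ x, F x = E (h * x) := by
  have key : ∀ x, F x = E ((∑ j, F (l j) * star (l j)) * x) := by
    intro x
    conv_lhs => rw [← hl.left hE x]
    rw [map_sum, Finset.sum_mul, map_sum]
    refine Finset.sum_congr rfl fun j _ => ?_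
    rw [hFr _ (hE.mem _), mul_assoc, hE.left (hFB _)]
  refine ⟨_, mem_centAlg.2 fun b hb => ?_, key⟩
  refine hl.ext fun x => ?_
  rw [mul_assoc, ← key, mul_assoc, hE.left hb, ← key, hFl b hb]

end CondExp

/-! ### Traciality from the balance condition -/

section Trace

variable {B : StarSubalgebra ℂ A} {E : A →ₗ[ℂ] A} {n : ℕ} {l : Fin n → A} {r : ℝ}

/-- The balance condition `∑ lᵢ z lᵢ* = r E(z)` on the centralizer, for a quasi-basis `l` of `E`: the
first-order condition for minimality of the index. -/
def Balanced (B : StarSubalgebra ℂ A) (E : A →ₗ[ℂ] A) {n : ℕ} (l : Fin n → A) (r : ℝ) : Prop :=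
  ∀ z ∈ centAlg B, ∑ i, l i * z * star (l i) = (r : ℂ) • E z

/-- Under the balance condition the centralizer lies in the centralizer of `E`. The modular map `θ`
defined by `E (x z) = E (θ z x)` is an involution, because `∑ lᵢ · lᵢ*` has the inverse modular
map; being positive for the inner product `E (x y*)`, it is the identity. -/
lemma Balanced.central (hE : IsCondExp (B : Set A) E) (hl : IsRightQB E l) (hr : r ≠ 0)
    (hbal : Balanced B E l r) {z : A} (hz : z ∈ centAlg B) (x : A) : E (x * z) = E (z * x) := by
  have hex : ∀ z ∈ centAlg B, ∃ t ∈ centAlg B, ∀ x, E (x * z) = E (t * x) := by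
    intro z hz
    obtain ⟨t, ht, h⟩ := exists_radonNikodym hE hl (E ∘ₗ LinearMap.mulRight ℂ z)
      (by
        intro b hb x
        simp only [LinearMap.comp_apply, LinearMap.mulRight_apply]
        rw [mul_assoc, ← centAlg.comm hz hb, ← mul_assoc, hE.right hb])
      (by
        intro b hb x
        simp only [LinearMap.comp_apply, LinearMap.mulRight_apply]
        rw [mul_assoc, hE.left hb])
      (fun x => hE.mem _)
    exact ⟨t, ht, h⟩
  have hr' : (r : ℂ) ≠ 0 := by exact_mod_cast hr
  -- the modular map of `∑ lᵢ · lᵢ*` is inverse to that of `E`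
  have hinv : ∀ z ∈ centAlg B, ∀ t ∈ centAlg B, (∀ x, E (x * z) = E (t * x)) →
      ∀ y ∈ centAlg B, E (y * t) = E (z * y) := by
    intro z hz t ht hzt y hy
    have h1 : ∑ i, l i * (y * t) * star (l i) = ∑ j, l j * (z * y) * star (l j) := by
      have e1 : ∀ i, l i * (y * t) * star (l i) =
          ∑ j, l i * E (star (l i) * (l j * z)) * y * star (l j) := by
        intro i
        have : t * star (l i) = ∑ j, E (star (l i) * l j * z) * star (l j) := by
          conv_lhs => rw [← hl.right (t * star (l i))]
          refine Finset.sum_congr rfl fun j _ => ?_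
          rw [hzt, mul_assoc]
        rw [mul_assoc, mul_assoc, this, Finset.mul_sum, Finset.mul_sum]
        refine Finset.sum_congr rfl fun j _ => ?_
        rw [← mul_assoc y, centAlg.comm hy (hE.mem _)]
        simp only [mul_assoc]
      rw [Finset.sum_congr rfl fun i _ => e1 i, Finset.sum_comm]
      refine Finset.sum_congr rfl fun j _ => ?_
      rw [← Finset.sum_mul, ← Finset.sum_mul, hl.left hE]
      simp only [mul_assoc]
    rw [hbal _ (mul_mem hy ht), hbal _ (mul_mem hz hy)] at h1
    exact smul_right_injective A hr' h1
  obtain ⟨t, ht, hzt⟩ := hex z hz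
  obtain ⟨s, hs, hts⟩ := hex t ht
  have hsz : s = z := by
    rw [← sub_eq_zero]
    have hw : s - z ∈ centAlg B := sub_mem hs hz
    apply hE.faithful' hl
    rw [sub_mul, map_sub, ← hts, hinv z hz t ht hzt _ (star_mem hw), sub_self]
  subst hsz
  have hv : t - s ∈ centAlg B := sub_mem ht hs
  -- `t - s` is an eigenvector of the modular map with eigenvalue `-1`
  have hmod : ∀ x, E (x * (t - s)) = -E ((t - s) * x) := by
    intro x
    rw [mul_sub, map_sub, hts, hzt, sub_mul, map_sub]
    abel
  have h0 : E (star (t - s) * (t - s)) = 0 := by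
    refine (hE.pos _).antisymm ?_
    rw [hmod, neg_neg]
    exact hE.pos' _
  have := hE.faithful hl h0
  rw [hzt, sub_eq_zero.1 this]

/-- Balanced expectations of the same index coincide: the Radon–Nikodym element `h` of one with
respect to the other satisfies `h² = 1` and is positive. -/
lemma Balanced.unique (hE : IsCondExp (B : Set A) E) (hl : IsRightQB E l) (hr : r ≠ 0)
    (hbal : Balanced B E l r) {F : A →ₗ[ℂ] A} {m : ℕ} {μ : Fin m → A}
    (hF : IsCondExp (B : Set A) F) (hμ : IsRightQB F μ) (hbalF : Balanced B F μ r) : F = E := by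
  have hr' : (r : ℂ) ≠ 0 := by exact_mod_cast hr
  obtain ⟨h, hh, hFE⟩ := exists_radonNikodym hE hl F (fun b hb x => hF.right hb x)
    (fun b hb x => hF.left hb x) hF.mem
  obtain ⟨k, hk, hEF⟩ := exists_radonNikodym hF hμ E (fun b hb x => hE.right hb x)
    (fun b hb x => hE.left hb x) hE.mem
  have hkh : k * h = 1 := by
    refine hμ.ext fun x => ?_
    rw [mul_assoc, ← hEF, ← hFE, one_mul]
  have hsig : ∀ z ∈ centAlg B, F z = E (k * z) := by
    intro z hz
    have h1 : ∑ i, μ i * z * star (μ i) = ∑ j, l j * (k * z) * star (l j) := by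
      have e1 : ∀ i, μ i * z * star (μ i) =
          ∑ j, μ i * F (star (μ i) * (l j * k)) * z * star (l j) := by
        intro i
        have : star (μ i) = ∑ j, F (star (μ i) * (l j * k)) * star (l j) := by
          conv_lhs => rw [← hl.right (star (μ i))]
          refine Finset.sum_congr rfl fun j _ => ?_
          rw [hEF, ← hbalF.central hF hμ hr hk, mul_assoc]
        conv_lhs => rw [this]
        rw [Finset.mul_sum]
        refine Finset.sum_congr rfl fun j _ => ?_
        rw [← mul_assoc, mul_assoc (μ i) z, centAlg.comm hz (hF.mem _)]
        simp only [mul_assoc]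
      rw [Finset.sum_congr rfl fun i _ => e1 i, Finset.sum_comm]
      refine Finset.sum_congr rfl fun j _ => ?_
      rw [← Finset.sum_mul, ← Finset.sum_mul, hμ.left hF]
      simp only [mul_assoc]
    rw [hbalF _ hz, hbal _ (mul_mem hk hz)] at h1
    exact smul_right_injective A hr' h1
  have hhk : h = k := by
    rw [← sub_eq_zero]
    apply hE.faithful' hl
    rw [sub_mul, map_sub, ← hFE, hsig _ (star_mem (sub_mem hh hk)), sub_self]
  subst hhk
  have h0 : E ((h - 1) * star (h - 1)) = 0 := by
    refine (hE.pos' _).antisymm ?_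
    have := hF.pos' (h - 1)
    rw [hFE, ← mul_assoc, mul_sub, hkh, mul_one, ← neg_sub, neg_mul, map_neg] at this
    exact this
  have h1 := sub_eq_zero.1 (hE.faithful' hl h0)
  ext x
  rw [hFE, h1, one_mul]

end Trace

/-! ### The first-order condition for minimality -/

section Minimal

variable {B : StarSubalgebra ℂ A} {E : A →ₗ[ℂ] A} {n : ℕ} {l : Fin n → A} {r : ℝ}

/-- Minimality against the perturbation `E (k · k) / p`, where `E (k²) = p`: its index is `p q` with
`∑ lᵢ k⁻² lᵢ* = q`. -/
lemma index_le [Nontrivial A] (hE : IsCondExp (B : Set A) E) (hl : IsRightQB E l)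
    (hmin : ∀ F : A →ₗ[ℂ] A, IsCondExp (B : Set A) F → ∀ (m : ℕ) (μ : Fin m → A), IsRightQB F μ →
      ∀ s : ℝ, (∑ i, μ i * star (μ i)) = (s : ℂ) • 1 → r ≤ s)
    {k m : A} (hk : k ∈ centAlg B) (hm : m ∈ centAlg B) (hks : star k = k) (hms : star m = m)
    (hkm : m * k = 1) {p q : ℝ} (hp : E (k * k) = (p : ℂ) • 1)
    (hq : ∑ i, l i * (m * m) * star (l i) = (q : ℂ) • 1) : r ≤ p * q := by
  have hppos : 0 < p := by
    have h1 : IsPos ((p : ℂ) • (1 : A)) := by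
      rw [← hp]
      simpa [hks] using hE.pos k
    obtain ⟨p', hp', he⟩ := h1.coeff
    have he' : p = p' := by exact_mod_cast he
    refine lt_of_le_of_ne (he' ▸ hp') fun h0 => ?_
    have hk0 : k = 0 := hE.faithful hl (by rw [hks, hp, ← h0]; simp)
    rw [hk0, mul_zero] at hkm
    exact zero_ne_one hkm
  have hpC : (p : ℂ) ≠ 0 := by exact_mod_cast hppos.ne'
  let F : A →ₗ[ℂ] A :=
    ((p⁻¹ : ℝ) : ℂ) • (E ∘ₗ LinearMap.mulLeft ℂ k ∘ₗ LinearMap.mulRight ℂ k)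
  have hFa : ∀ x, F x = ((p⁻¹ : ℝ) : ℂ) • E (k * (x * k)) := fun x => rfl
  have hF : IsCondExp (B : Set A) F := by
    refine ⟨fun x => B.smul_mem (hE.mem _) _, fun b hb => ?_, fun x => ?_, ?_⟩
    · rw [hFa, ← mul_assoc, centAlg.comm hk hb, mul_assoc, hE.left hb, hp, mul_smul_comm, mul_one,
        smul_smul, ← Complex.ofReal_mul, inv_mul_cancel₀ hppos.ne', Complex.ofReal_one, one_smul]
    · have h1 : IsPos (E (k * (star x * x * k))) := by
        simpa [hks, mul_assoc] using hE.pos (x * k)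
      exact h1.smul (inv_nonneg.2 hppos.le)
    · intro b₁ hb₁ b₂ hb₂ x
      rw [hFa, hFa]
      have : k * (b₁ * x * b₂ * k) = b₁ * (k * (x * k)) * b₂ := by
        rw [mul_assoc _ b₂ k, ← centAlg.comm hk hb₂]
        simp only [← mul_assoc]
        rw [centAlg.comm hk hb₁]
      rw [this, hE.2.2.2 _ hb₁ _ hb₂]
      simp
  have hsq : ((Real.sqrt p : ℝ) : ℂ) * ((Real.sqrt p : ℝ) : ℂ) = p := by
    rw [← Complex.ofReal_mul, Real.mul_self_sqrt hppos.le]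
  let μ : Fin n → A := fun i => ((Real.sqrt p : ℝ) : ℂ) • (l i * m)
  have hμs : ∀ i, star (μ i) = ((Real.sqrt p : ℝ) : ℂ) • (m * star (l i)) := by
    intro i
    simp only [μ, star_smul, star_mul, hms, Complex.star_def, Complex.conj_ofReal]
  have hμ : IsRightQB F μ := by
    intro x
    have e1 : ∀ i, F (x * μ i) * star (μ i) = m * (E (k * x * l i) * star (l i)) := by
      intro i
      rw [hμs, hFa]
      simp only [μ, mul_smul_comm, smul_mul_assoc, map_smul, smul_smul]
      rw [mul_assoc x, mul_assoc (l i), hkm, mul_one, ← mul_assoc (E _) m,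
        ← centAlg.comm hm (hE.mem _), ← mul_assoc k, mul_assoc m]
      have : ((Real.sqrt p : ℝ) : ℂ) * (((p⁻¹ : ℝ) : ℂ) * ((Real.sqrt p : ℝ) : ℂ)) = 1 := by
        rw [mul_left_comm, hsq, Complex.ofReal_inv, inv_mul_cancel₀ hpC]
      rw [this, one_smul]
    rw [Finset.sum_congr rfl fun i _ => e1 i, ← Finset.mul_sum, hl.right, ← mul_assoc, hkm, one_mul]
  refine hmin F hF n μ hμ (p * q) ?_
  have e2 : ∀ i, μ i * star (μ i) = (p : ℂ) • (l i * (m * m) * star (l i)) := by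
    intro i
    rw [hμs]
    simp only [μ, mul_smul_comm, smul_mul_assoc, smul_smul, hsq, mul_assoc]
  rw [Finset.sum_congr rfl fun i _ => e2 i, ← Finset.smul_sum, hq, smul_smul, Complex.ofReal_mul]

/-- A self-adjoint scalar is real. -/
lemma real_of_selfAdjoint [Nontrivial A] {x : A} (hx : star x = x) {c : ℂ}
    (h : x = c • (1 : A)) : ∃ t : ℝ, x = (t : ℂ) • (1 : A) := by
  rw [h, star_smul, star_one] at hx
  have hc : star c = c := smul_left_injective ℂ (one_ne_zero (α := A)) hx
  obtain ⟨t, rfl⟩ := Complex.conj_eq_iff_real.1 hc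
  exact ⟨t, h⟩

lemma star_sigma {a : A} (ha : star a = a) :
    star (∑ i, l i * a * star (l i)) = ∑ i, l i * a * star (l i) := by
  simp [star_sum, ha, mul_assoc]

/-- A minimal expectation is balanced: differentiate the index of the perturbations by
`k = 1 + t a` at `t = 0`. -/
lemma balanced_of_minimal [Nontrivial A] (hBclosed : IsClosed (B : Set A))
    (hAsimple : IsSimpleCStar (Set.univ : Set A)) (hBsimple : IsSimpleCStar (B : Set A))
    (hE : IsCondExp (B : Set A) E) (hl : IsRightQB E l)
    (hidx : (∑ i, l i * star (l i)) = (r : ℂ) • 1)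
    (hmin : ∀ F : A →ₗ[ℂ] A, IsCondExp (B : Set A) F → ∀ (m : ℕ) (μ : Fin m → A), IsRightQB F μ →
      ∀ s : ℝ, (∑ i, μ i * star (μ i)) = (s : ℂ) • 1 → r ≤ s) : Balanced B E l r := by
  have hsa : ∀ a ∈ centAlg B, star a = a →
      ∑ i, l i * a * star (l i) = (r : ℂ) • E a := by
    intro a ha has
    obtain ⟨c, hc⟩ := hE.map_cent hBclosed hBsimple ha
    obtain ⟨α, hα⟩ := real_of_selfAdjoint (hE.selfAdjoint has) hc
    have haa : star (a * a) = a * a := by simp [has]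
    obtain ⟨c, hc⟩ := hE.map_cent hBclosed hBsimple (mul_mem ha ha)
    obtain ⟨β, hβ⟩ := real_of_selfAdjoint (hE.selfAdjoint haa) hc
    obtain ⟨c, hc⟩ := sigma_scalar hAsimple hE hl ha
    obtain ⟨γ, hγ⟩ := real_of_selfAdjoint (star_sigma has) hc
    -- a functional reading off the coefficient of a scalar
    obtain ⟨φ, -, hφ⟩ := exists_dual_vector ℂ (1 : A) (by simp)
    rw [CStarRing.norm_one] at hφ
    let inv : ℝ → A := fun t => Ring.inverse (1 + t • a)
    have hinv : HasDerivAt inv (-a) 0 := by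
      have h1 : HasDerivAt (fun t : ℝ => 1 + t • a) a 0 := by
        simpa using ((hasDerivAt_id (0 : ℝ)).smul_const a).const_add 1
      have h2 := hasFDerivAt_ringInverse (𝕜 := ℝ) (1 : Aˣ)
      have h3 : HasFDerivAt Ring.inverse
          (-ContinuousLinearMap.mulLeftRight ℝ A ↑(1 : Aˣ)⁻¹ ↑(1 : Aˣ)⁻¹)
          ((fun t : ℝ => 1 + t • a) 0) := by simpa using h2
      simpa [inv, Function.comp_def] using h3.comp_hasDerivAt (0 : ℝ) h1
    have hinv0 : inv 0 = 1 := by simp [inv]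
    let g : ℝ → A := fun t => ∑ i, l i * (inv t * inv t) * star (l i)
    have hg : HasDerivAt g (∑ i, l i * (-a + -a) * star (l i)) 0 := by
      refine HasDerivAt.fun_sum fun i _ => ?_
      have := ((hinv.mul hinv).const_mul (l i)).mul_const (star (l i))
      simpa [hinv0] using this
    let q : ℝ → ℝ := fun t => (φ (g t)).re
    have hq : HasDerivAt q (-(2 * γ)) 0 := by
      have h1 : HasDerivAt (fun t => φ (g t)) (φ (∑ i, l i * (-a + -a) * star (l i))) 0 :=
        ((φ.restrictScalars ℝ).hasFDerivAt).comp_hasDerivAt (0 : ℝ) hg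
      have h2 := (Complex.reCLM.hasFDerivAt).comp_hasDerivAt (0 : ℝ) h1
      have h3 : ∑ i, l i * (-a + -a) * star (l i) = ((-(2 * γ) : ℝ) : ℂ) • (1 : A) := by
        have : ∀ i, l i * (-a + -a) * star (l i) = (-2 : ℂ) • (l i * a * star (l i)) := by
          intro i
          have : -a + -a = (-2 : ℂ) • a := by module
          rw [this, mul_smul_comm, smul_mul_assoc]
        rw [Finset.sum_congr rfl fun i _ => this i, ← Finset.smul_sum, hγ, smul_smul]
        congr 1
        push_cast
        ring
      rw [h3, map_smul, hφ] at h2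
      simpa [q, Function.comp_def] using h2
    have hq0 : q 0 = r := by
      have hg0 : g 0 = (r : ℂ) • (1 : A) := by simpa [g, hinv0] using hidx
      simp only [q, hg0, map_smul, hφ]
      simp
    have hf : HasDerivAt (fun t => (1 + 2 * α * t + β * t ^ 2) * q t)
        ((2 * α) * r + -(2 * γ)) 0 := by
      have h1 : HasDerivAt (fun t : ℝ => 1 + 2 * α * t + β * t ^ 2) (2 * α) 0 := by
        have := (((hasDerivAt_id (0 : ℝ)).const_mul (2 * α)).const_add 1).fun_add
          (((hasDerivAt_id (0 : ℝ)).pow 2).const_mul β)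
        simpa using this
      simpa [hq0] using h1.fun_mul hq
    have hloc : IsLocalMin (fun t => (1 + 2 * α * t + β * t ^ 2) * q t) 0 := by
      have hcont : Filter.Tendsto (fun t : ℝ => 1 + t • a) (nhds 0) (nhds 1) := by
        have : Continuous (fun t : ℝ => 1 + t • a) := by fun_prop
        simpa using this.tendsto 0
      have hunit := hcont.eventually (Units.isOpen.mem_nhds (isUnit_one (M := A)))
      filter_upwards [hunit] with t ht
      have hu : IsUnit (1 + t • a) := ht
      have hta : t • a = (t : ℂ) • a := (Complex.coe_smul t a).symm
      have hk : 1 + t • a ∈ centAlg B := by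
        rw [hta]
        exact add_mem (one_mem _) ((centAlg B).smul_mem ha _)
      have hks : star (1 + t • a) = 1 + t • a := by
        rw [hta]; simp [has]
      have hmk : inv t * (1 + t • a) = 1 := Ring.inverse_mul_cancel _ hu
      have hkm : (1 + t • a) * inv t = 1 := Ring.mul_inverse_cancel _ hu
      have hm : inv t ∈ centAlg B := by
        rw [mem_centAlg]
        intro b hb
        calc inv t * b = inv t * (b * ((1 + t • a) * inv t)) := by rw [hkm, mul_one]
          _ = inv t * (1 + t • a) * b * inv t := by
            rw [← mul_assoc b, ← centAlg.comm hk hb]; simp only [mul_assoc]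
          _ = b * inv t := by rw [hmk, one_mul]
      have hms : star (inv t) = inv t := by
        have h1 : (1 + t • a) * star (inv t) = 1 := by
          have := congrArg star hmk
          rwa [star_mul, hks, star_one] at this
        calc star (inv t) = inv t * (1 + t • a) * star (inv t) := by rw [hmk, one_mul]
          _ = inv t := by rw [mul_assoc, h1, mul_one]
      have hp : E ((1 + t • a) * (1 + t • a)) =
          ((1 + 2 * α * t + β * t ^ 2 : ℝ) : ℂ) • (1 : A) := by
        have : (1 + t • a) * (1 + t • a) =
            1 + (2 * t : ℂ) • a + ((t : ℂ) ^ 2) • (a * a) := by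
          rw [hta]
          simp only [add_mul, mul_add, one_mul, mul_one, smul_mul_assoc, mul_smul_comm]
          module
        rw [this, map_add, map_add, map_smul, map_smul, hα, hβ, hE.map_one]
        push_cast
        module
      have hmm : star (inv t * inv t) = inv t * inv t := by simp [hms]
      obtain ⟨c, hc⟩ := sigma_scalar hAsimple hE hl (mul_mem hm hm)
      obtain ⟨s, hs⟩ := real_of_selfAdjoint (star_sigma hmm) hc
      have hqs : q t = s := by
        have hgt : g t = (s : ℂ) • (1 : A) := hs
        simp only [q, hgt, map_smul, hφ]
        simp
      have := index_le hE hl hmin hk hm hks hms hmk hp hs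
      simpa [hq0, hqs] using this
    have h0 := hloc.hasDerivAt_eq_zero hf
    have hγα : γ = r * α := by linarith
    rw [hγ, hα, smul_smul, hγα, Complex.ofReal_mul]
  intro z hz
  obtain ⟨a, b, ha, hb, rfl, hS⟩ := exists_re_im z
  obtain ⟨haC, hbC⟩ := hS _ hz
  have : ∀ i, l i * (a + Complex.I • b) * star (l i) =
      l i * a * star (l i) + Complex.I • (l i * b * star (l i)) := by
    intro i
    rw [mul_add, add_mul, mul_smul_comm, smul_mul_assoc]
  rw [Finset.sum_congr rfl fun i _ => this i, Finset.sum_add_distrib, ← Finset.smul_sum,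
    hsa a haC ha, hsa b hbC hb, map_add, map_smul, smul_add, smul_comm]

/-- The index is nonzero. -/
lemma index_ne_zero [Nontrivial A] (hl : IsRightQB E l)
    (hidx : (∑ i, l i * star (l i)) = (r : ℂ) • 1) : r ≠ 0 := by
  rintro rfl
  have h0 : ∑ i, l i * star (l i) = 0 := by simpa using hidx
  have hz : ∀ i, l i = 0 := by
    intro i
    have h1 : l i * star (l i) = 0 := by
      refine (IsPos.self_mul_star _).antisymm ?_
      have : -(l i * star (l i)) = ∑ j ∈ Finset.univ.erase i, l j * star (l j) := by
        rw [neg_eq_iff_add_eq_zero, Finset.add_sum_erase _ (fun j => l j * star (l j)) (Finset.mem_univ i), h0]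
      rw [this]
      exact IsPos.sum _ _ fun j _ => IsPos.self_mul_star _
    exact (CStarRing.mul_star_self_eq_zero_iff _).1 h1
  apply one_ne_zero (α := A)
  rw [← hl.right 1]
  simp [hz]

end Minimal

/-! ### Finite dimensionality of the centralizer -/

section FiniteDim

variable {B : StarSubalgebra ℂ A} {E : A →ₗ[ℂ] A} {n : ℕ} {l : Fin n → A} {r : ℝ}

/-- A finite subset of the centralizer that is orthonormal for the form `E (x* y)`. -/
def IsOrthonormal (B : StarSubalgebra ℂ A) (E : A →ₗ[ℂ] A) (S : Finset A) : Prop :=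
  (∀ x ∈ S, x ∈ centAlg B) ∧ (∀ x ∈ S, E (star x * x) = 1) ∧
    ∀ x ∈ S, ∀ y ∈ S, x ≠ y → E (star x * y) = 0

/-- Bessel's inequality for the `B`-valued inner product, applied to each `lᵢ` and summed over `i`,
bounds orthonormal families by the index. -/
lemma IsOrthonormal.card_le [Nontrivial A] (hE : IsCondExp (B : Set A) E) (hl : IsRightQB E l)
    (hcentral : ∀ z ∈ centAlg B, ∀ x, E (x * z) = E (z * x))
    (hidx : (∑ i, l i * star (l i)) = (r : ℂ) • 1) {S : Finset A} (hS : IsOrthonormal B E S) :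
    (S.card : ℝ) ≤ r := by
  obtain ⟨hSC, hS1, hS0⟩ := hS
  have bessel : ∀ x, IsPos (E (x * star x) - ∑ z ∈ S, E (z * x) * star (E (z * x))) := by
    intro x
    set b : A → A := fun z => E (z * x) with hb
    have hbB : ∀ z, b z ∈ B := fun z => hE.mem _
    have h := hE.pos' (x - ∑ z ∈ S, b z * star z)
    have e1 : E (x * star (∑ z ∈ S, b z * star z)) = ∑ z ∈ S, b z * star (b z) := by
      simp only [star_sum, star_mul, star_star, Finset.mul_sum, map_sum]
      refine Finset.sum_congr rfl fun z hz => ?_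
      rw [← mul_assoc, hE.right (star_mem (hbB z)), hcentral z (hSC z hz)]
    have e2 : E ((∑ z ∈ S, b z * star z) * star x) = ∑ z ∈ S, b z * star (b z) := by
      simp only [Finset.sum_mul, map_sum]
      refine Finset.sum_congr rfl fun z hz => ?_
      rw [mul_assoc, hE.left (hbB z), ← star_mul, hE.map_star, hcentral z (hSC z hz)]
    have e3 : E ((∑ z ∈ S, b z * star z) * star (∑ z ∈ S, b z * star z)) =
        ∑ z ∈ S, b z * star (b z) := by
      simp only [star_sum, star_mul, star_star, Finset.sum_mul, map_sum, Finset.mul_sum]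
      rw [Finset.sum_comm]
      refine Finset.sum_congr rfl fun z hz => ?_
      have e4 : ∀ y, E (b z * star z * (y * star (b y))) = b z * E (star z * y) * star (b y) := by
        intro y
        have : b z * star z * (y * star (b y)) = b z * (star z * y) * star (b y) := by
          simp only [mul_assoc]
        rw [this, hE.2.2.2 _ (hbB z) _ (star_mem (hbB y))]
      rw [Finset.sum_eq_single z]
      · rw [e4, hS1 z hz, mul_one]
      · intro y hy hyz
        rw [e4, hS0 z hz y hy (Ne.symm hyz), mul_zero, zero_mul]
      · exact fun h => absurd hz h
    rw [star_sub, sub_mul, mul_sub, mul_sub, map_sub, map_sub, map_sub, e1, e2, e3] at h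
    convert h using 1
    abel
  have hsum := IsPos.sum Finset.univ _ fun i _ => bessel (l i)
  rw [Finset.sum_sub_distrib, ← map_sum, hidx, map_smul, hE.map_one, Finset.sum_comm] at hsum
  have e5 : ∀ z ∈ S, ∑ i, E (z * l i) * star (E (z * l i)) = 1 := by
    intro z hz
    have : ∀ i, E (z * l i) * star (E (z * l i)) = E (E (z * l i) * star (l i) * star z) := by
      intro i
      rw [mul_assoc, hE.left (hE.mem _), ← star_mul, hE.map_star]
    rw [Finset.sum_congr rfl fun i _ => this i, ← map_sum, ← Finset.sum_mul, hl.right,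
      ← hcentral z (hSC z hz), hS1 z hz]
  rw [Finset.sum_congr rfl e5, Finset.sum_const] at hsum
  have e6 : (r : ℂ) • (1 : A) - S.card • (1 : A) = ((r - S.card : ℝ) : ℂ) • (1 : A) := by
    push_cast
    rw [sub_smul, Nat.cast_smul_eq_nsmul]
  rw [e6] at hsum
  obtain ⟨t, ht, hrt⟩ := hsum.coeff
  have : r - S.card = t := by exact_mod_cast hrt
  linarith

/-- A maximal orthonormal family spans the centralizer. -/
lemma finiteDimensional_cent [Nontrivial A] (hBclosed : IsClosed (B : Set A))
    (hBsimple : IsSimpleCStar (B : Set A)) (hE : IsCondExp (B : Set A) E) (hl : IsRightQB E l)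
    (hcentral : ∀ z ∈ centAlg B, ∀ x, E (x * z) = E (z * x))
    (hidx : (∑ i, l i * star (l i)) = (r : ℂ) • 1) :
    FiniteDimensional ℂ ↥(centSubmodule (B : Set A)) := by
  classical
  let P : Set ℕ := {k | ∃ S : Finset A, IsOrthonormal B E S ∧ S.card = k}
  have hne : P.Nonempty := ⟨0, ∅, ⟨by simp, by simp, by simp⟩, rfl⟩
  have hbd : BddAbove P := by
    refine ⟨⌊r⌋₊, ?_⟩
    rintro _ ⟨S, hS, rfl⟩
    exact Nat.le_floor (hS.card_le hE hl hcentral hidx)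
  obtain ⟨S, hS, hcard⟩ := Nat.sSup_mem hne hbd
  have hmax : ∀ T, IsOrthonormal B E T → T.card ≤ S.card := by
    intro T hT
    rw [hcard]
    exact le_csSup hbd ⟨T, hT, rfl⟩
  obtain ⟨hSC, hS1, hS0⟩ := hS
  have hle : centSubmodule (B : Set A) ≤ Submodule.span ℂ (S : Set A) := by
    intro z hz
    have hzC : z ∈ centAlg B := mem_centAlg.2 hz
    have hc : ∀ s, ∃ c : ℂ, s ∈ S → E (star s * z) = c • (1 : A) := by
      intro s
      by_cases hs : s ∈ S
      · obtain ⟨c, hc⟩ := hE.map_cent hBclosed hBsimple (mul_mem (star_mem (hSC s hs)) hzC)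
        exact ⟨c, fun _ => hc⟩
      · exact ⟨0, fun h => absurd h hs⟩
    choose c hc using hc
    have hproj : ∑ s ∈ S, c s • s ∈ Submodule.span ℂ (S : Set A) :=
      Submodule.sum_mem _ fun s hs => Submodule.smul_mem _ _ (Submodule.subset_span hs)
    set y := z - ∑ s ∈ S, c s • s with hy
    have hyC : y ∈ centAlg B :=
      sub_mem hzC (sum_mem fun s hs => (centAlg B).smul_mem (hSC s hs) _)
    have horth : ∀ s ∈ S, E (star s * y) = 0 := by
      intro s hs
      rw [hy, mul_sub, map_sub, hc s hs, Finset.mul_sum, map_sum, Finset.sum_eq_single s]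
      · rw [mul_smul_comm, map_smul, hS1 s hs, sub_self]
      · intro t ht hts
        rw [mul_smul_comm, map_smul, hS0 s hs t ht (Ne.symm hts), smul_zero]
      · exact fun h => absurd hs h
    have hy0 : y = 0 := by
      by_contra hne
      obtain ⟨d, hd⟩ := hE.map_cent hBclosed hBsimple (mul_mem (star_mem hyC) hyC)
      have hpos := hE.pos y
      rw [hd] at hpos
      obtain ⟨ρ, hρ, rfl⟩ := hpos.coeff
      have hρ0 : ρ ≠ 0 := by
        rintro rfl
        exact hne (hE.faithful hl (by simpa using hd))
      have hρpos : 0 < ρ := lt_of_le_of_ne hρ (Ne.symm hρ0)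
      set v := (((Real.sqrt ρ)⁻¹ : ℝ) : ℂ) • y with hv
      have hv1 : E (star v * v) = 1 := by
        rw [hv, star_smul, smul_mul_smul_comm, map_smul, hd, smul_smul, Complex.star_def,
          Complex.conj_ofReal, ← Complex.ofReal_mul, ← Complex.ofReal_mul]
        have : (Real.sqrt ρ)⁻¹ * (Real.sqrt ρ)⁻¹ * ρ = 1 := by
          rw [← mul_inv, Real.mul_self_sqrt hρ, inv_mul_cancel₀ hρ0]
        rw [this, Complex.ofReal_one, one_smul]
      have hvorth : ∀ s ∈ S, E (star s * v) = 0 := by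
        intro s hs
        rw [hv, mul_smul_comm, map_smul, horth s hs, smul_zero]
      have hvorth' : ∀ s ∈ S, E (star v * s) = 0 := by
        intro s hs
        have := congrArg star (hvorth s hs)
        rw [← hE.map_star] at this
        simpa using this
      have hvS : v ∉ S := by
        intro h
        have := hvorth v h
        rw [hv1] at this
        exact one_ne_zero this
      have hins : IsOrthonormal B E (insert v S) := by
        refine ⟨?_, ?_, ?_⟩
        · intro x hx
          rcases Finset.mem_insert.1 hx with rfl | hx
          · exact (centAlg B).smul_mem hyC _
          · exact hSC x hx
        · intro x hx
          rcases Finset.mem_insert.1 hx with rfl | hx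
          · exact hv1
          · exact hS1 x hx
        · intro x hx w hw hxw
          rcases Finset.mem_insert.1 hx with h1 | hx <;> rcases Finset.mem_insert.1 hw with h2 | hw
          · exact absurd (h1.trans h2.symm) hxw
          · rw [h1]; exact hvorth' w hw
          · rw [h2]; exact hvorth x hx
          · exact hS0 x hx w hw hxw
      have := hmax _ hins
      rw [Finset.card_insert_of_notMem hvS] at this
      omega
    rw [sub_eq_zero.1 hy0]
    exact hproj
  have : FiniteDimensional ℂ (Submodule.span ℂ (S : Set A)) := FiniteDimensional.span_finset ℂ S
  exact Submodule.finiteDimensional_of_le hle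

end FiniteDim

/-! ### The action of the normalizer -/

section Normalizer

variable {B : StarSubalgebra ℂ A} {E : A →ₗ[ℂ] A} {u : A}

lemma normalizer.star_mul (hu : u ∈ normalizer (B : Set A)) : star u * u = 1 :=
  Unitary.star_mul_self_of_mem hu.1

lemma normalizer.mul_star (hu : u ∈ normalizer (B : Set A)) : u * star u = 1 :=
  Unitary.mul_star_self_of_mem hu.1

lemma normalizer.conj_mem (hu : u ∈ normalizer (B : Set A)) {b : A} (hb : b ∈ B) :
    u * b * star u ∈ B := by
  have : u * b * star u ∈ (fun x => u * x * star u) '' (B : Set A) := ⟨b, hb, rfl⟩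
  rwa [hu.2] at this

/-- Conjugating back: `u* (u x u*) u = x`. -/
lemma normalizer.cancel (hu : u ∈ normalizer (B : Set A)) (x : A) :
    star u * (u * x * star u) * u = x := by
  have h := normalizer.star_mul hu
  calc star u * (u * x * star u) * u = (star u * u) * x * (star u * u) := by simp only [mul_assoc]
    _ = x := by rw [h, one_mul, mul_one]

lemma normalizer.cancel' (hu : u ∈ normalizer (B : Set A)) (x : A) :
    u * (star u * x * u) * star u = x := by
  have h := normalizer.mul_star hu
  calc u * (star u * x * u) * star u = (u * star u) * x * (u * star u) := by simp only [mul_assoc]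
    _ = x := by rw [h, one_mul, mul_one]

lemma normalizer.conj_mul (hu : u ∈ normalizer (B : Set A)) (x y : A) :
    (u * x * star u) * (u * y * star u) = u * (x * y) * star u := by
  have h := normalizer.star_mul hu
  calc (u * x * star u) * (u * y * star u) = u * x * (star u * u) * y * star u := by
        simp only [mul_assoc]
    _ = u * (x * y) * star u := by rw [h, mul_one]; simp only [mul_assoc]

lemma normalizer.star_mem (hu : u ∈ normalizer (B : Set A)) : star u ∈ normalizer (B : Set A) := by
  refine ⟨Unitary.star_mem hu.1, Set.Subset.antisymm ?_ ?_⟩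
  · rintro _ ⟨b, hb, rfl⟩
    rw [← hu.2] at hb
    obtain ⟨c, hc, rfl⟩ := hb
    simpa only [star_star, normalizer.cancel hu] using hc
  · intro b hb
    exact ⟨u * b * star u, normalizer.conj_mem hu hb, by simp only [star_star, normalizer.cancel hu]⟩

lemma normalizer.mul_mem {v : A} (hu : u ∈ normalizer (B : Set A))
    (hv : v ∈ normalizer (B : Set A)) : u * v ∈ normalizer (B : Set A) := by
  refine ⟨MulMemClass.mul_mem hu.1 hv.1, ?_⟩
  have : (fun x => u * v * x * star (u * v)) =
      (fun x => u * x * star u) ∘ (fun x => v * x * star v) := by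
    funext x
    simp only [Function.comp, StarMul.star_mul, mul_assoc]
  rw [this, Set.image_comp, hv.2, hu.2]

lemma normalizer.one_mem : (1 : A) ∈ normalizer (B : Set A) := by
  refine ⟨OneMemClass.one_mem _, ?_⟩
  simp

lemma normalizer.conj_mem' (hu : u ∈ normalizer (B : Set A)) {b : A} (hb : b ∈ B) :
    star u * b * u ∈ B := by
  simpa using normalizer.conj_mem (normalizer.star_mem hu) hb

lemma normalizer.conj_cent (hu : u ∈ normalizer (B : Set A)) {z : A} (hz : z ∈ cent (B : Set A)) :
    u * z * star u ∈ cent (B : Set A) := by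
  intro b hb
  rw [← normalizer.cancel' hu b, normalizer.conj_mul hu, normalizer.conj_mul hu,
    hz _ (normalizer.conj_mem' hu hb)]

lemma normalizer.conj_cent' (hu : u ∈ normalizer (B : Set A)) {z : A} (hz : z ∈ cent (B : Set A)) :
    star u * z * u ∈ cent (B : Set A) := by
  simpa using normalizer.conj_cent (normalizer.star_mem hu) hz

lemma normalizer.conj_minCentral (hu : u ∈ normalizer (B : Set A)) {p : A}
    (hp : IsMinCentralProjIn (cent (B : Set A)) p) :
    IsMinCentralProjIn (cent (B : Set A)) (u * p * star u) := by
  obtain ⟨hpC, hp0, hpp, hps, hpc, hpm⟩ := hp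
  have hu' := normalizer.star_mem hu
  have conj' : ∀ x y, (star u * x * u) * (star u * y * u) = star u * (x * y) * u := by
    intro x y
    simpa using normalizer.conj_mul hu' x y
  refine ⟨normalizer.conj_cent hu hpC, ?_, ?_, ?_, ?_, ?_⟩
  · intro h
    apply hp0
    rw [← normalizer.cancel hu p, h, mul_zero, zero_mul]
  · rw [normalizer.conj_mul hu, hpp]
  · simp [hps, mul_assoc]
  · intro x hx
    rw [← normalizer.cancel' hu x, normalizer.conj_mul hu, normalizer.conj_mul hu,
      hpc _ (normalizer.conj_cent' hu hx)]
  · intro q hqC hqq hqs hqc hqp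
    have h := hpm (star u * q * u) (normalizer.conj_cent' hu hqC) (by rw [conj', hqq])
      (by simp [hqs, mul_assoc])
      (by
        intro x hx
        rw [← normalizer.cancel hu x, conj', conj', hqc _ (normalizer.conj_cent hu hx)])
      (by
        conv_lhs => rw [← normalizer.cancel hu p]
        rw [conj', hqp])
    rcases h with h | h
    · left
      rw [← normalizer.cancel' hu q, h, mul_zero, zero_mul]
    · right
      rw [← normalizer.cancel' hu q, h]

lemma minCentral_orthogonal {S : Set A} (hS : ∀ x ∈ S, ∀ y ∈ S, x * y ∈ S) {p q : A}
    (hp : IsMinCentralProjIn S p) (hq : IsMinCentralProjIn S q) (hne : p ≠ q) : p * q = 0 := by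
  obtain ⟨hpC, hp0, hpp, hps, hpc, hpm⟩ := hp
  obtain ⟨hqC, hq0, hqq, hqs, hqc, hqm⟩ := hq
  have hpq : p * q = q * p := hpc q hqC
  have h1 : p * q * (p * q) = p * q := by
    rw [mul_assoc, ← mul_assoc q, ← hpq, mul_assoc p q q, hqq, ← mul_assoc, hpp]
  have h2 : star (p * q) = p * q := by rw [star_mul, hps, hqs, hpq]
  have h3 : ∀ x ∈ S, p * q * x = x * (p * q) := by
    intro x hx
    rw [mul_assoc, hqc x hx, ← mul_assoc, hpc x hx, mul_assoc]
  have a := hpm _ (hS p hpC q hqC) h1 h2 h3 (by rw [mul_assoc, ← hpq, ← mul_assoc, hpp])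
  have b := hqm _ (hS p hpC q hqC) h1 h2 h3 (by rw [mul_assoc, hqq])
  rcases a with a | a
  · exact a
  · rcases b with b | b
    · exact b
    · exact absurd (a.symm.trans b) hne

/-- Conjugating a minimal expectation by a normalizer gives an expectation of the same index, hence
the same expectation. -/
lemma minimal_conj [Nontrivial A] (hBclosed : IsClosed (B : Set A))
    (hAsimple : IsSimpleCStar (Set.univ : Set A)) (hBsimple : IsSimpleCStar (B : Set A))
    (hE : IsCondExp (B : Set A) E) {n : ℕ} {l : Fin n → A} {r : ℝ} (hl : IsRightQB E l)
    (hidx : (∑ i, l i * star (l i)) = (r : ℂ) • 1)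
    (hmin : ∀ F : A →ₗ[ℂ] A, IsCondExp (B : Set A) F → ∀ (m : ℕ) (μ : Fin m → A), IsRightQB F μ →
      ∀ s : ℝ, (∑ i, μ i * star (μ i)) = (s : ℂ) • 1 → r ≤ s)
    (hu : u ∈ normalizer (B : Set A)) (x : A) : E (u * x * star u) = u * E x * star u := by
  have hsu := normalizer.star_mul hu
  have hus := normalizer.mul_star hu
  let F : A →ₗ[ℂ] A := LinearMap.mulLeft ℂ (star u) ∘ₗ LinearMap.mulRight ℂ u ∘ₗ E ∘ₗ
    LinearMap.mulRight ℂ (star u) ∘ₗ LinearMap.mulLeft ℂ u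
  have hFa : ∀ x, F x = star u * E (u * x * star u) * u := fun x => by simp [F, mul_assoc]
  have hF : IsCondExp (B : Set A) F := by
    refine ⟨fun x => ?_, fun b hb => ?_, fun x => ?_, ?_⟩
    · rw [hFa]
      exact normalizer.conj_mem' hu (hE.mem _)
    · rw [hFa, hE.2.1 _ (normalizer.conj_mem hu hb), normalizer.cancel hu]
    · obtain ⟨y, hy⟩ := hE.pos (x * star u)
      refine ⟨y * u, ?_⟩
      rw [hFa]
      have : u * (star x * x) * star u = star (x * star u) * (x * star u) := by
        simp [mul_assoc]
      rw [this, hy]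
      simp [mul_assoc]
    · intro b₁ hb₁ b₂ hb₂ x
      rw [hFa, hFa, ← normalizer.conj_mul hu, ← normalizer.conj_mul hu,
        hE.2.2.2 _ (normalizer.conj_mem hu hb₁) _ (normalizer.conj_mem hu hb₂)]
      calc star u * (u * b₁ * star u * E (u * x * star u) * (u * b₂ * star u)) * u
          = (star u * u) * b₁ * (star u * E (u * x * star u) * u) * b₂ * (star u * u) := by
            simp only [mul_assoc]
        _ = _ := by rw [hsu, one_mul, mul_one]
  let μ : Fin n → A := fun i => star u * l i * u
  have hμs : ∀ i, star (μ i) = star u * star (l i) * u := fun i => by simp [μ, mul_assoc]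
  have hμ : IsRightQB F μ := by
    intro x
    have e1 : ∀ i, F (x * μ i) * star (μ i) =
        star u * (E (u * x * star u * l i) * star (l i)) * u := by
      intro i
      have e2 : u * (x * μ i) * star u = u * x * star u * l i := by
        calc u * (x * μ i) * star u = u * x * star u * l i * (u * star u) := by
              simp only [μ, mul_assoc]
          _ = _ := by rw [hus, mul_one]
      rw [hFa, hμs, e2]
      calc star u * E (u * x * star u * l i) * u * (star u * star (l i) * u)
          = star u * E (u * x * star u * l i) * (u * star u) * star (l i) * u := by
            simp only [mul_assoc]
        _ = _ := by rw [hus, mul_one]; simp only [mul_assoc]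
    rw [Finset.sum_congr rfl fun i _ => e1 i, ← Finset.sum_mul, ← Finset.mul_sum, hl.right,
      normalizer.cancel hu]
  have hidxF : (∑ i, μ i * star (μ i)) = (r : ℂ) • 1 := by
    have e3 : ∀ i, μ i * star (μ i) = star u * (l i * star (l i)) * u := by
      intro i
      rw [hμs]
      simpa [μ] using normalizer.conj_mul (normalizer.star_mem hu) (l i) (star (l i))
    rw [Finset.sum_congr rfl fun i _ => e3 i, ← Finset.sum_mul, ← Finset.mul_sum, hidx]
    simp [hsu]
  have hbal := balanced_of_minimal hBclosed hAsimple hBsimple hE hl hidx hmin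
  have hbalF := balanced_of_minimal hBclosed hAsimple hBsimple hF hμ hidxF hmin
  have hFE : F = E := hbal.unique hE hl (index_ne_zero hl hidx) hF hμ hbalF
  rw [← normalizer.cancel' hu (E (u * x * star u)), ← hFa, hFE]

/-- Regularity: what commutes with the normalizer is central in `A`. -/
lemma central_of_regular (hreg : IsRegular (B : Set A)) {Q : A}
    (hQ : ∀ u ∈ normalizer (B : Set A), Q * u = u * Q) (a : A) :
    Q * a = a * Q := by
  have h := StarSubalgebra.topologicalClosure_adjoin_le_centralizer_centralizer ℂ
    (normalizer (B : Set A))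
  have ha : a ∈ (StarAlgebra.adjoin ℂ (normalizer (B : Set A))).topologicalClosure := by
    rw [hreg]
    trivial
  have h2 := StarSubalgebra.mem_centralizer_iff ℂ |>.1 (h ha) Q ?_
  · exact h2.1
  · refine StarSubalgebra.mem_centralizer_iff ℂ |>.2 fun u hu => ⟨(hQ u hu).symm, ?_⟩
    exact (hQ _ (normalizer.star_mem hu)).symm

end Normalizer

/-! ### Block decomposition of the centralizer -/

/-- Multiplication by a finite orthogonal family of idempotents summing to `1` decomposes a
submodule stable under it. -/
lemma finrank_eq_sum_of_orthogonal (M : Submodule ℂ A) [FiniteDimensional ℂ M] (T : Finset A)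
    (hTM : ∀ q ∈ T, ∀ x ∈ M, q * x ∈ M) (hidem : ∀ q ∈ T, q * q = q)
    (horth : ∀ p ∈ T, ∀ q ∈ T, p ≠ q → p * q = 0) (hsum : ∑ q ∈ T, q = 1) :
    Module.finrank ℂ M = ∑ q ∈ T, Module.finrank ℂ (M.map (LinearMap.mulLeft ℂ q)) := by
  classical
  have hfix : ∀ q ∈ T, ∀ y ∈ M.map (LinearMap.mulLeft ℂ q), q * y = y ∧ y ∈ M := by
    rintro q hq _ ⟨x, hx, rfl⟩
    simp only [LinearMap.mulLeft_apply]
    exact ⟨by rw [← mul_assoc, hidem q hq], hTM q hq x hx⟩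
  let e : M ≃ₗ[ℂ] ((q : T) → M.map (LinearMap.mulLeft ℂ (q : A))) :=
    { toFun := fun x q => ⟨(q : A) * x, x, x.2, rfl⟩
      map_add' := fun x y => by ext q; simp [mul_add]
      map_smul' := fun c x => by ext q; simp
      invFun := fun y => ⟨∑ q : T, (y q : A),
        Submodule.sum_mem _ fun q _ => (hfix q q.2 _ (y q).2).2⟩
      left_inv := by
        intro x
        ext
        simp only
        rw [← Finset.sum_mul, Finset.sum_coe_sort T (fun q => q), hsum, one_mul]
      right_inv := by
        intro y
        ext q
        simp only
        rw [Finset.mul_sum, Finset.sum_eq_single q]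
        · exact (hfix q q.2 _ (y q).2).1
        · intro p _ hpq
          rw [← (hfix p p.2 _ (y p).2).1, ← mul_assoc,
            horth q q.2 p p.2 (fun h => hpq (Subtype.ext h.symm)), zero_mul]
        · simp }
  rw [e.finrank_eq, Module.finrank_pi_fintype,
    Finset.sum_coe_sort T (fun q => Module.finrank ℂ (M.map (LinearMap.mulLeft ℂ q)))]

lemma finrank_conj {B : StarSubalgebra ℂ A} {u : A} (hu : u ∈ normalizer (B : Set A)) (p : A) :
    Module.finrank ℂ ((centSubmodule (B : Set A)).map (LinearMap.mulLeft ℂ (u * p * star u))) =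
      Module.finrank ℂ ((centSubmodule (B : Set A)).map (LinearMap.mulLeft ℂ p)) := by
  let e : A ≃ₗ[ℂ] A :=
    { toFun := fun x => u * x * star u
      map_add' := fun x y => by simp [mul_add, add_mul]
      map_smul' := fun c x => by simp
      invFun := fun x => star u * x * u
      left_inv := fun x => normalizer.cancel hu x
      right_inv := fun x => normalizer.cancel' hu x }
  rw [← LinearEquiv.finrank_map_eq e ((centSubmodule (B : Set A)).map (LinearMap.mulLeft ℂ p))]
  have hmap : (centSubmodule (B : Set A)).map (LinearMap.mulLeft ℂ (u * p * star u)) =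
      ((centSubmodule (B : Set A)).map (LinearMap.mulLeft ℂ p)).map (e : A →ₗ[ℂ] A) := by
    ext y
    constructor
    · rintro ⟨x, hx, rfl⟩
      refine ⟨p * (star u * x * u), ⟨_, normalizer.conj_cent' hu hx, rfl⟩, ?_⟩
      change u * (p * (star u * x * u)) * star u = u * p * star u * x
      calc u * (p * (star u * x * u)) * star u = u * p * star u * x * (u * star u) := by
            simp only [mul_assoc]
        _ = _ := by rw [normalizer.mul_star hu, mul_one]
    · rintro ⟨_, ⟨x, hx, rfl⟩, rfl⟩
      exact ⟨u * x * star u, normalizer.conj_cent hu hx, normalizer.conj_mul hu p x⟩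
  rw [hmap]

/-- The Markov formula: the orbit of `p` under the normalizer is a finite set of orthogonal
projections of the same trace and the same block dimension, and its sum is central in `A`, hence
equal to `1`. -/
lemma markov [Nontrivial A] {B : StarSubalgebra ℂ A} {E : A →ₗ[ℂ] A} {n : ℕ} {l : Fin n → A}
    (hBclosed : IsClosed (B : Set A))
    (hAsimple : IsSimpleCStar (Set.univ : Set A)) (hBsimple : IsSimpleCStar (B : Set A))
    (hreg : IsRegular (B : Set A)) (hE : IsCondExp (B : Set A) E) (hl : IsRightQB E l)
    (hconj : ∀ u ∈ normalizer (B : Set A), ∀ x, E (u * x * star u) = u * E x * star u)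
    [FiniteDimensional ℂ ↥(centSubmodule (B : Set A))] {p : A}
    (hp : IsMinCentralProjIn (cent (B : Set A)) p) :
    ((Module.finrank ℂ ↥(centSubmodule (B : Set A)) : ℕ) : ℂ) • E p =
      ((Module.finrank ℂ
          ↥((centSubmodule (B : Set A)).map (LinearMap.mulLeft ℂ p)) : ℕ) : ℂ) • (1 : A) := by
  classical
  have hmulC : ∀ x ∈ cent (B : Set A), ∀ y ∈ cent (B : Set A), x * y ∈ cent (B : Set A) :=
    fun x hx y hy => mem_centAlg.1 (mul_mem (mem_centAlg.2 hx) (mem_centAlg.2 hy))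
  let O : Set A := {q | ∃ u ∈ normalizer (B : Set A), q = u * p * star u}
  have hOmin : ∀ q ∈ O, IsMinCentralProjIn (cent (B : Set A)) q := by
    rintro _ ⟨u, hu, rfl⟩
    exact normalizer.conj_minCentral hu hp
  have hpO : p ∈ O := ⟨1, normalizer.one_mem, by simp⟩
  have hOconj : ∀ u ∈ normalizer (B : Set A), ∀ q ∈ O, u * q * star u ∈ O := by
    rintro u hu _ ⟨v, hv, rfl⟩
    exact ⟨u * v, normalizer.mul_mem hu hv, by simp [mul_assoc]⟩
  have horth : ∀ q ∈ O, ∀ q' ∈ O, q ≠ q' → q * q' = 0 := fun q hq q' hq' hne =>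
    minCentral_orthogonal hmulC (hOmin q hq) (hOmin q' hq') hne
  have hpsq : star p * p = p := by rw [hp.2.2.2.1, hp.2.2.1]
  obtain ⟨c, hc⟩ := hE.map_cent hBclosed hBsimple (mem_centAlg.2 hp.1)
  have hpos := hE.pos p
  rw [hpsq, hc] at hpos
  obtain ⟨ρ, hρ, rfl⟩ := hpos.coeff
  have hρ0 : ρ ≠ 0 := by
    rintro rfl
    exact hp.2.1 (hE.faithful hl (by rw [hpsq, hc]; simp))
  have hρpos : 0 < ρ := lt_of_le_of_ne hρ (Ne.symm hρ0)
  have hOE : ∀ q ∈ O, E q = (ρ : ℂ) • (1 : A) := by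
    rintro _ ⟨u, hu, rfl⟩
    rw [hconj u hu, hc]
    simp [normalizer.mul_star hu]
  have hsumE : ∀ T : Finset A, (T : Set A) ⊆ O →
      E (∑ q ∈ T, q) = ((T.card * ρ : ℝ) : ℂ) • (1 : A) := by
    intro T hT
    rw [map_sum, Finset.sum_congr rfl fun q hq => hOE q (hT hq), Finset.sum_const,
      ← Nat.cast_smul_eq_nsmul ℂ, smul_smul]
    push_cast
    rfl
  -- `1 - ∑ q` is a projection, so the trace bounds the number of its terms
  have hbound : ∀ T : Finset A, (T : Set A) ⊆ O → (T.card : ℝ) * ρ ≤ 1 := by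
    intro T hT
    set e := ∑ q ∈ T, q with he
    have hee : e * e = e := by
      rw [he, Finset.sum_mul]
      refine Finset.sum_congr rfl fun q hq => ?_
      rw [Finset.mul_sum, Finset.sum_eq_single q]
      · exact (hOmin q (hT hq)).2.2.1
      · exact fun q' hq' hne => horth q (hT hq) q' (hT hq') hne.symm
      · exact fun h => absurd hq h
    have hes : star e = e := by
      rw [he, star_sum]
      exact Finset.sum_congr rfl fun q hq => (hOmin q (hT hq)).2.2.2.1
    have h1 := hE.pos (1 - e)
    have h2 : star (1 - e) * (1 - e) = 1 - e := by
      rw [star_sub, star_one, hes, mul_sub, sub_mul, sub_mul, hee]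
      simp
    rw [h2, map_sub, hE.map_one, hsumE T hT] at h1
    have h3 : (1 : A) - ((T.card * ρ : ℝ) : ℂ) • (1 : A) =
        ((1 - T.card * ρ : ℝ) : ℂ) • (1 : A) := by
      rw [Complex.ofReal_sub, sub_smul, Complex.ofReal_one, one_smul]
    rw [h3] at h1
    obtain ⟨t, ht, hrt⟩ := h1.coeff
    have : 1 - T.card * ρ = t := by exact_mod_cast hrt
    linarith
  have hfin : O.Finite := by
    by_contra hinf
    obtain ⟨k, hk⟩ := exists_nat_gt (1 / ρ)
    obtain ⟨T, hT, hcard⟩ := Set.Infinite.exists_subset_card_eq hinf k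
    have h1 := hbound T hT
    rw [hcard] at h1
    have h2 := (div_lt_iff₀ hρpos).1 hk
    linarith
  let T : Finset A := hfin.toFinset
  have hT : ∀ q, q ∈ T ↔ q ∈ O := fun q => hfin.mem_toFinset
  have hTO : (T : Set A) ⊆ O := fun q hq => (hT q).1 hq
  set Q := ∑ q ∈ T, q with hQ
  have hQu : ∀ u ∈ normalizer (B : Set A), Q * u = u * Q := by
    intro u hu
    have h1 : u * Q * star u = Q := by
      rw [hQ, Finset.mul_sum, Finset.sum_mul]
      refine Finset.sum_nbij' (fun q => u * q * star u) (fun q => star u * q * u) ?_ ?_ ?_ ?_ ?_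
      · exact fun q hq => (hT _).2 (hOconj u hu q ((hT q).1 hq))
      · intro q hq
        have := hOconj _ (normalizer.star_mem hu) q ((hT q).1 hq)
        rw [star_star] at this
        exact (hT _).2 this
      · exact fun q _ => normalizer.cancel hu q
      · exact fun q _ => normalizer.cancel' hu q
      · exact fun q _ => rfl
    calc Q * u = u * Q * star u * u := by rw [h1]
      _ = u * Q := by rw [mul_assoc, normalizer.star_mul hu, mul_one]
  obtain ⟨d, hd⟩ := scalar_of_central (z := Q) ⊤ (by simp) (by simpa using hAsimple) (by simp)
    fun a _ => central_of_regular hreg hQu a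
  have hQp : Q * p = p := by
    rw [hQ, Finset.sum_mul, Finset.sum_eq_single p]
    · exact hp.2.2.1
    · exact fun q hq hne => horth q ((hT q).1 hq) p hpO hne
    · exact fun h => absurd ((hT p).2 hpO) h
  have hd1 : d = 1 := by
    have h1 : d • p = (1 : ℂ) • p := by
      have := hQp
      rw [hd, smul_mul_assoc, one_mul] at this
      rw [one_smul]
      exact this
    exact smul_left_injective ℂ hp.2.1 h1
  have hQ1 : Q = 1 := by rw [hd, hd1, one_smul]
  have hcardρ : ((T.card * ρ : ℝ) : ℂ) = 1 := by
    have h1 := hsumE T hTO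
    rw [← hQ, hQ1, hE.map_one] at h1
    refine smul_left_injective ℂ (one_ne_zero (α := A)) ?_
    simpa using h1.symm
  have hrank := finrank_eq_sum_of_orthogonal (centSubmodule (B : Set A)) T
    (fun q hq x hx => hmulC q (hOmin q (hTO hq)).1 x hx)
    (fun q hq => (hOmin q (hTO hq)).2.2.1)
    (fun q hq q' hq' hne => horth q (hTO hq) q' (hTO hq') hne) hQ1
  have hrank' : ∀ q ∈ T, Module.finrank ℂ ((centSubmodule (B : Set A)).map (LinearMap.mulLeft ℂ q)) =
      Module.finrank ℂ ((centSubmodule (B : Set A)).map (LinearMap.mulLeft ℂ p)) := by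
    intro q hq
    obtain ⟨u, hu, rfl⟩ := (hT q).1 hq
    exact finrank_conj hu p
  rw [Finset.sum_congr rfl hrank', Finset.sum_const, smul_eq_mul] at hrank
  rw [hrank, hc, smul_smul]
  congr 1
  push_cast at hcardρ ⊢
  linear_combination (Module.finrank ℂ
    ((centSubmodule (B : Set A)).map (LinearMap.mulLeft ℂ p)) : ℂ) * hcardρ


/-- for a regular inclusion `B ⊂ A` of simple unital C*-algebras with a
finite-index conditional expectation and minimal conditional expectation `E₀`, the
centralizer `C_A(B)` is finite dimensional, `E₀` maps it into `ℂ·1`, and the induced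
functional `τ₀` is a faithful tracial state which is the Markov trace for
`ℂ ⊆ C_A(B)` with modulus `dim_ℂ C_A(B)`. -/
theorem tau0_is_Markov_trace
    (B : StarSubalgebra ℂ A) (hBclosed : IsClosed (B : Set A))
    (hAsimple : IsSimpleCStar (Set.univ : Set A))
    (hBsimple : IsSimpleCStar (B : Set A))
    (hreg : IsRegular (B : Set A))
    (E : A →ₗ[ℂ] A) (hE : IsCondExp (B : Set A) E)
    (nE : ℕ) (lE : Fin nE → A) (hlE : IsRightQB E lE)
    (E₀ : A →ₗ[ℂ] A) (hE₀ : IsMinimalCondExp (B : Set A) E₀) :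
    FiniteDimensional ℂ ↥(centSubmodule (B : Set A)) ∧
    (∀ z ∈ cent (B : Set A), ∃ c : ℂ, E₀ z = c • (1 : A)) ∧
    (∀ y ∈ cent (B : Set A), ∀ z ∈ cent (B : Set A), E₀ (y * z) = E₀ (z * y)) ∧
    (∀ z ∈ cent (B : Set A), E₀ (star z * z) = 0 → z = 0) ∧
    (∀ p : A, IsMinCentralProjIn (cent (B : Set A)) p →
      ((Module.finrank ℂ ↥(centSubmodule (B : Set A)) : ℕ) : ℂ) • E₀ p =
        ((Module.finrank ℂ
            ↥((centSubmodule (B : Set A)).map (LinearMap.mulLeft ℂ p)) : ℕ) : ℂ) •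
          (1 : A)) := by
  rcases subsingleton_or_nontrivial A with hA | hA
  · have : Subsingleton ↥(centSubmodule (B : Set A)) := inferInstance
    exact ⟨inferInstance, fun z _ => ⟨0, Subsingleton.elim _ _⟩, fun _ _ _ _ => Subsingleton.elim _ _,
      fun _ _ _ => Subsingleton.elim _ _, fun _ _ => Subsingleton.elim _ _⟩
  obtain ⟨hE₀, r₀, n, l, hl, hidx, hmin⟩ := hE₀
  have hbal := balanced_of_minimal hBclosed hAsimple hBsimple hE₀ hl hidx hmin
  have hcentral : ∀ z ∈ centAlg B, ∀ x, E₀ (x * z) = E₀ (z * x) := fun z hz x =>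
    hbal.central hE₀ hl (index_ne_zero hl hidx) hz x
  have hfd := finiteDimensional_cent hBclosed hBsimple hE₀ hl hcentral hidx
  refine ⟨hfd, fun z hz => hE₀.map_cent hBclosed hBsimple (mem_centAlg.2 hz),
    fun y _ z hz => hcentral z (mem_centAlg.2 hz) y, fun z _ h => hE₀.faithful hl h, fun p hp => ?_⟩
  exact markov hBclosed hAsimple hBsimple hreg hE₀ hl
    (fun u hu x => minimal_conj hBclosed hAsimple hBsimple hE₀ hl hidx hmin hu x) hp

end RegularInclusion
end

section
/- Let H be a complex Hilbert space, B ⊆ B(H) a simple unital C*-subalgebra containing the identity operator, K a finite group, and w : K → U(B(H)) a map with w_e = 1 such that: (i) for all s, t ∈ K the operator σ(s,t) := w_s w_t w_{st}* is a unitary belonging to B; (ii) w_s B w_s* = B for all s ∈ K; and (iii) for every s ≠ e the automorphism Ad(w_s)|_B of B is outer. Let A := C*(B ∪ {w_s : s ∈ K}) ⊆ B(H). Then the Weyl group W₀(B ⊂ A) := N_A(B)/U(B) is isomorphic to K. -/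
/-!
The substance is that every unitary normalizer `v ∈ A` of `B` lies in `U(B) w s` for some `s`; the
other claims follow from the cocycle identity and outerness.

* A simple unital C*-algebra has no algebraic ideals and has scalar centre, so a nonzero `b ∈ B`
  intertwining two automorphisms `Ad U`, `Ad V` of `B` is a multiple of a unitary, as `b* b` and
  `b b*` are central (`exists_unitary_of_intertwiner`). By outerness there is thus no nonzero
  intertwiner between `Ad (w s)` and `Ad (w t)` for `s ≠ t` (`OuterAction.free`), and a
  shortest-relation argument shows that the `w s` are linearly independent over `B`
  (`OuterAction.independent`).
* The sums `∑ s, b s * w s` with `b s ∈ B` form a *-algebra, and it is closed: it is the image of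
  the reduced twisted crossed product, realised as a closed *-subalgebra of the `K × K` matrices,
  under a *-homomorphism that is injective by independence, hence isometric. So `A` consists of
  such sums (`OuterAction.exists_expansion`).
* If `v = ∑ s, b s * w s` normalizes `B`, comparing coefficients in `v x = (v x v*) v` shows that
  each `b s` intertwines `Ad (w s)` with `Ad v`. Two nonzero coefficients would, by the first
  point, contradict outerness, so `v = b s * w s` for a single `s` (`OuterAction.normalizer_mem`).
-/

namespace RegularInclusion

variable {A : Type*} [NormedRing A] [StarRing A] [CStarRing A] [CompleteSpace A]
  [NormedAlgebra ℂ A] [StarModule ℂ A]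

/-- The normalizer of `B` computed inside the C*-subalgebra (given by the subset) `S`. -/
def normalizerIn (S B : Set A) : Set A :=
  {u | u ∈ S ∧ u ∈ unitary A ∧ (fun x => u * x * star u) '' B = B}

/-! ### Simple C*-algebras -/

section Simple

variable {R : Type*} [CStarAlgebra R] {B : StarSubalgebra ℂ R}

/-- A topologically simple closed unital subalgebra is algebraically simple: a nonzero two-sided
ideal, closed or not, contains `1`. If its closure is everything, the ideal meets the open unit ball
around `1`, all of whose elements are invertible, and inverses stay in `B` by spectral permanence. -/
lemma one_mem_of_ideal (hB : IsClosed (B : Set R)) (hS : IsSimpleCStar (B : Set R))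
    (J : Set R) (hJB : J ⊆ B) (h0 : (0 : R) ∈ J) (hadd : ∀ x ∈ J, ∀ y ∈ J, x + y ∈ J)
    (hmul : ∀ x ∈ J, ∀ b ∈ B, x * b ∈ J ∧ b * x ∈ J) {a : R} (ha : a ∈ J) (ha0 : a ≠ 0) :
    (1 : R) ∈ J := by
  have hcl := hS (closure J) (closure_minimal hJB hB) isClosed_closure (subset_closure h0)
    (fun x hx y hy => map_mem_closure₂ continuous_add hx hy hadd)
    (fun x hx b hb =>
      ⟨map_mem_closure (f := (· * b)) (continuous_mul_const b) hx (fun z hz => (hmul z hz b hb).1),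
        map_mem_closure (f := (b * ·)) (continuous_const_mul b) hx (fun z hz => (hmul z hz b hb).2)⟩)
  rcases hcl with h | h
  · have := subset_closure ha
    rw [h] at this
    exact absurd this ha0
  · have h1 : (1 : R) ∈ closure J := by rw [h]; exact B.one_mem
    obtain ⟨j, hj, hd⟩ := Metric.mem_closure_iff.1 h1 1 one_pos
    rw [dist_eq_norm] at hd
    have hu : IsUnit j := by
      have := (Units.oneSub (1 - j) hd).isUnit
      rwa [Units.val_oneSub, sub_sub_cancel] at this
    have := hB
    have hu' : IsUnit (⟨j, hJB hj⟩ : B) := (StarSubalgebra.coe_isUnit B).1 hu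
    obtain ⟨k, hk⟩ := hu'.exists_right_inv
    have hk' : j * (k : R) = 1 := congrArg Subtype.val hk
    rw [← hk']
    exact (hmul j hj k k.2).1

/-- The centre of a simple unital C*-algebra consists of scalars: `z - c` is zero for any `c` in the
spectrum of `z`, since otherwise the ideal it generates would make it invertible. -/
lemma central_eq_scalar [Nontrivial R] (hB : IsClosed (B : Set R))
    (hS : IsSimpleCStar (B : Set R)) {z : R} (hz : z ∈ B) (hc : ∀ b ∈ B, z * b = b * z) :
    ∃ c : ℂ, z = algebraMap ℂ R c := by
  obtain ⟨c, hcs⟩ := spectrum.nonempty z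
  refine ⟨c, ?_⟩
  by_contra hne
  have hyB : algebraMap ℂ R c - z ∈ B := sub_mem (B.algebraMap_mem c) hz
  have hyc : ∀ b ∈ B, (algebraMap ℂ R c - z) * b = b * (algebraMap ℂ R c - z) := by
    intro b hb
    rw [sub_mul, mul_sub, hc b hb, Algebra.commutes]
  have h1 := one_mem_of_ideal hB hS
    {x | ∃ b ∈ B, (algebraMap ℂ R c - z) * b = x}
    (by rintro _ ⟨b, hb, rfl⟩; exact mul_mem hyB hb)
    ⟨0, B.zero_mem, by simp⟩
    (by
      rintro _ ⟨b, hb, rfl⟩ _ ⟨d, hd, rfl⟩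
      exact ⟨b + d, add_mem hb hd, mul_add _ _ _⟩)
    (by
      rintro _ ⟨b, hb, rfl⟩ d hd
      refine ⟨⟨b * d, mul_mem hb hd, (mul_assoc _ _ _).symm⟩, ⟨d * b, mul_mem hd hb, ?_⟩⟩
      rw [← mul_assoc, hyc d hd, mul_assoc])
    (a := algebraMap ℂ R c - z) ⟨1, B.one_mem, mul_one _⟩
    (fun h => hne (sub_eq_zero.1 h).symm)
  obtain ⟨b, hb, hb1⟩ := h1
  exact hcs ⟨⟨_, b, hb1, by rw [← hyc b hb, hb1]⟩, rfl⟩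

variable [PartialOrder R] [StarOrderedRing R]

open scoped ComplexOrder in
/-- A nonzero intertwiner `b ∈ B` between two automorphisms `Ad U` and `Ad V` of a simple `B` is a
multiple of a unitary: `b* b` commutes with `Ad U (B) = B` and `b b*` with `Ad V (B) = B`, so both
are scalars. -/
lemma exists_unitary_of_intertwiner [Nontrivial R] (hB : IsClosed (B : Set R))
    (hS : IsSimpleCStar (B : Set R)) {U V : R}
    (hU : (fun x => U * x * star U) '' (B : Set R) = B)
    (hV : (fun x => V * x * star V) '' (B : Set R) = B)
    {b : R} (hb : b ∈ B) (hb0 : b ≠ 0)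
    (h : ∀ x ∈ B, b * (U * x * star U) = V * x * star V * b) :
    ∃ c : ℂ, c • b ∈ B ∧ c • b ∈ unitary R := by
  have hstar : ∀ x ∈ B, star b * (V * x * star V) = U * x * star U * star b := by
    intro x hx
    have := congrArg star (h (star x) (star_mem hx))
    simp only [star_mul, star_star] at this
    simpa only [mul_assoc] using this.symm
  obtain ⟨l, hl⟩ := central_eq_scalar hB hS (z := star b * b) (mul_mem (star_mem hb) hb) (by
    intro y hy
    have hy' : y ∈ (fun x => U * x * star U) '' (B : Set R) := by rw [hU]; exact hy
    obtain ⟨x, hx, rfl⟩ := hy'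
    dsimp only
    rw [mul_assoc (star b), h x hx, ← mul_assoc, hstar x hx, mul_assoc])
  obtain ⟨m, hm⟩ := central_eq_scalar hB hS (z := b * star b) (mul_mem hb (star_mem hb)) (by
    intro y hy
    have hy' : y ∈ (fun x => V * x * star V) '' (B : Set R) := by rw [hV]; exact hy
    obtain ⟨x, hx, rfl⟩ := hy'
    dsimp only
    rw [mul_assoc b, hstar x hx, ← mul_assoc, h x hx, mul_assoc])
  have hlm : l = m := by
    have h1 : b * (star b * b) = b * star b * b := (mul_assoc _ _ _).symm
    rw [hl, hm, ← Algebra.commutes, ← Algebra.smul_def, ← Algebra.smul_def] at h1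
    exact smul_left_injective ℂ hb0 h1
  subst hlm
  have hl0 : l ≠ 0 := by
    rintro rfl
    rw [map_zero, CStarRing.star_mul_self_eq_zero_iff] at hl
    exact hb0 hl
  have hlnn : 0 ≤ l := by
    have h1 : 0 ≤ algebraMap ℂ R l := hl ▸ star_mul_self_nonneg b
    exact spectrum_nonneg_of_nonneg h1 (by rw [spectrum.scalar_eq]; rfl)
  obtain ⟨hre, him⟩ := Complex.nonneg_iff.1 hlnn
  have hlr : l = (l.re : ℂ) := Complex.ext rfl (by simp [← him])
  -- Normalise by `c = l ^ (-1/2)`.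
  obtain ⟨c, hc⟩ : ∃ c : ℂ, c = (((Real.sqrt l.re)⁻¹ : ℝ) : ℂ) := ⟨_, rfl⟩
  have hcc : c * c * l = 1 := by
    have hr0 : l.re ≠ 0 := fun h0 => hl0 (by rw [hlr, h0, Complex.ofReal_zero])
    rw [hlr, hc, ← Complex.ofReal_mul, ← Complex.ofReal_mul, ← mul_inv,
      Real.mul_self_sqrt hre, inv_mul_cancel₀ hr0, Complex.ofReal_one]
  have hcs : star c = c := by rw [hc]; exact Complex.conj_ofReal _
  refine ⟨c, B.smul_mem hb c, ?_⟩
  rw [Unitary.mem_iff, star_smul, hcs, smul_mul_smul_comm, smul_mul_smul_comm, hl, hm,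
    Algebra.smul_def, ← map_mul, hcc, map_one]
  exact ⟨rfl, rfl⟩

end Simple

/-! ### Freeness of the cocycle action -/

/-- The hypotheses on `(B, w)`: `B` is a simple closed unital subalgebra, and the unitaries `w s`
implement a cocycle action of `K` on `B` by automorphisms that are outer for `s ≠ 1`. -/
structure OuterAction {R : Type*} [CStarAlgebra R] (B : StarSubalgebra ℂ R)
    {K : Type*} [Group K] (w : K → R) : Prop where
  closed : IsClosed (B : Set R)
  simple : IsSimpleCStar (B : Set R)
  one : w 1 = 1
  unit : ∀ s, w s ∈ unitary R
  cocycle : ∀ s t, w s * w t * star (w (s * t)) ∈ B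
  image : ∀ s, (fun x => w s * x * star (w s)) '' (B : Set R) = B
  outer : ∀ s, s ≠ 1 → ¬ ∃ u, u ∈ (B : Set R) ∧ u ∈ unitary R ∧
        ∀ x ∈ (B : Set R), w s * x * star (w s) = u * x * star u

namespace OuterAction

variable {R : Type*} [CStarAlgebra R] {B : StarSubalgebra ℂ R} {K : Type*} [Group K] {w : K → R}

lemma sw (h : OuterAction B w) (s : K) : star (w s) * w s = 1 :=
  Unitary.star_mul_self_of_mem (h.unit s)

lemma ws (h : OuterAction B w) (s : K) : w s * star (w s) = 1 :=
  Unitary.mul_star_self_of_mem (h.unit s)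

lemma sw_assoc (h : OuterAction B w) (s : K) (x : R) : star (w s) * (w s * x) = x := by
  rw [← mul_assoc, h.sw, one_mul]

lemma ws_assoc (h : OuterAction B w) (s : K) (x : R) : w s * (star (w s) * x) = x := by
  rw [← mul_assoc, h.ws, one_mul]

lemma conj_mem (h : OuterAction B w) (s : K) {x : R} (hx : x ∈ B) :
    w s * x * star (w s) ∈ B := by
  have : w s * x * star (w s) ∈ (fun x => w s * x * star (w s)) '' (B : Set R) := ⟨x, hx, rfl⟩
  rw [h.image] at this
  exact this

lemma conj_mem' (h : OuterAction B w) (s : K) {x : R} (hx : x ∈ B) :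
    star (w s) * x * w s ∈ B := by
  have hx' : x ∈ (fun x => w s * x * star (w s)) '' (B : Set R) := by rw [h.image]; exact hx
  obtain ⟨y, hy, rfl⟩ := hx'
  simp only [mul_assoc, h.sw_assoc, h.sw, mul_one]
  exact hy

/-- For `s ≠ t` the automorphisms `Ad (w s)` and `Ad (w t)` do not differ by an inner one, because
`w s * star (w t)` is a unitary of `B` times `w (s * t⁻¹)`. -/
lemma not_inner (h : OuterAction B w) {s t : K} (hst : s ≠ t) {u : R} (hu : u ∈ B)
    (huu : u ∈ unitary R)
    (hi : ∀ x ∈ B, u * (w t * x * star (w t)) = w s * x * star (w s) * u) : False := by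
  have hc := h.cocycle (s * t⁻¹) t
  rw [inv_mul_cancel_right] at hc
  have hne : s * t⁻¹ ≠ 1 := fun h1 => hst (mul_inv_eq_one.1 h1)
  refine h.outer _ hne ⟨w (s * t⁻¹) * w t * star (w s) * u, mul_mem hc hu,
    mul_mem (mul_mem (mul_mem (h.unit _) (h.unit _)) (Unitary.star_mem (h.unit _))) huu, ?_⟩
  intro y hy
  have hx := hi _ (h.conj_mem' t hy)
  have hx2 : u * y * star u = w s * (star (w t) * y * w t) * star (w s) := by
    have e : u * y = w s * (star (w t) * y * w t) * star (w s) * u := by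
      rw [← hx]
      simp only [mul_assoc, h.ws_assoc, h.ws, mul_one]
    rw [e, mul_assoc, Unitary.mul_star_self_of_mem huu, mul_one]
  calc w (s * t⁻¹) * y * star (w (s * t⁻¹))
      = w (s * t⁻¹) * w t * star (w s) * (w s * (star (w t) * y * w t) * star (w s))
          * (w s * star (w t) * star (w (s * t⁻¹))) := by
        simp only [mul_assoc, h.ws_assoc, h.sw_assoc]
    _ = _ := by
        rw [← hx2]
        simp only [star_mul, star_star, mul_assoc]

lemma mul_coset (h : OuterAction B w) {s t : K} {x y : R} (hx : x * star (w s) ∈ B)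
    (hy : y * star (w t) ∈ B) : x * y * star (w (s * t)) ∈ B := by
  have := mul_mem (mul_mem hx (h.conj_mem s hy)) (h.cocycle s t)
  simpa only [mul_assoc, h.sw_assoc] using this

lemma star_coset (h : OuterAction B w) {s : K} {x : R} (hx : x * star (w s) ∈ B) :
    star x * star (w s⁻¹) ∈ B := by
  have hc := star_mem (h.cocycle s⁻¹ s)
  have := mul_mem (h.conj_mem' s (star_mem hx)) hc
  simpa only [star_mul, star_star, inv_mul_cancel, h.one, mul_assoc, h.sw_assoc, one_mul, h.ws_assoc,
    star_one] using this

variable [PartialOrder R] [StarOrderedRing R]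

/-- Freeness: for `s ≠ t` there is no nonzero intertwiner in `B` from `Ad (w t)` to `Ad (w s)`. -/
lemma free (h : OuterAction B w) {s t : K} (hst : s ≠ t) {b : R} (hb : b ∈ B)
    (hi : ∀ x ∈ B, b * (w t * x * star (w t)) = w s * x * star (w s) * b) : b = 0 := by
  by_contra hb0
  have : Nontrivial R := ⟨b, 0, hb0⟩
  obtain ⟨c, hcB, hcu⟩ := exists_unitary_of_intertwiner h.closed h.simple (h.image t) (h.image s)
    hb hb0 hi
  refine h.not_inner hst hcB hcu fun x hx => ?_
  rw [smul_mul_assoc, hi x hx, mul_smul_comm]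

/-- The `w s` are linearly independent over `B`. In a nontrivial relation with as few terms as
possible, the coefficients at a fixed `t` form an ideal of `B`, so one may take the coefficient at
`t` to be `1`; commuting the relation past `B` then cancels that term, so the remaining coefficients
are intertwiners and vanish by freeness. -/
lemma independent (h : OuterAction B w) (F : Finset K) :
    ∀ b : K → R, (∀ s, b s ∈ B) → ∑ s ∈ F, b s * w s = 0 → ∀ s ∈ F, b s = 0 := by
  classical
  induction F using Finset.induction_on with
  | empty => simp
  | insert t F ht ih =>
    intro b hb hsum
    have key : b t = 0 := by
      by_contra hbt
      obtain ⟨c, hcB, hcs, hct⟩ := one_mem_of_ideal h.closed h.simple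
        {x | ∃ c : K → R, (∀ s, c s ∈ B) ∧ ∑ s ∈ insert t F, c s * w s = 0 ∧ c t = x}
        (by rintro _ ⟨c, hc, -, rfl⟩; exact hc t)
        ⟨0, fun _ => B.zero_mem, by simp, rfl⟩
        (by
          rintro _ ⟨c, hc, hcs, rfl⟩ _ ⟨d, hd, hds, rfl⟩
          refine ⟨c + d, fun s => add_mem (hc s) (hd s), ?_, rfl⟩
          simp only [Pi.add_apply, add_mul, Finset.sum_add_distrib, hcs, hds, add_zero])
        (by
          rintro _ ⟨c, hc, hcs, rfl⟩ x hx
          refine ⟨⟨fun s => c s * (w s * (star (w t) * x * w t) * star (w s)),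
            fun s => mul_mem (hc s) (h.conj_mem s (h.conj_mem' t hx)), ?_, ?_⟩,
            ⟨fun s => x * c s, fun s => mul_mem hx (hc s), ?_, rfl⟩⟩
          · have := congrArg (· * (star (w t) * x * w t)) hcs
            simp only [Finset.sum_mul, zero_mul] at this
            rw [← this]
            refine Finset.sum_congr rfl fun s _ => ?_
            simp only [mul_assoc, h.sw, mul_one]
          · simp only [mul_assoc, h.ws_assoc, h.ws, mul_one]
          · simp only [mul_assoc, ← Finset.mul_sum, hcs, mul_zero])
        ⟨b, hb, hsum, rfl⟩ hbt
      rw [Finset.sum_insert ht, hct, one_mul] at hcs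
      have hcomm : ∀ x ∈ B, ∀ s ∈ F,
          c s * (w s * x * star (w s)) = w t * x * star (w t) * c s := by
        intro x hx s hs
        have h1 : w t + ∑ s ∈ F, c s * w s = 0 := hcs
        have e1 := congrArg (· * x) h1
        have e2 := congrArg ((w t * x * star (w t)) * ·) h1
        simp only [add_mul, mul_add, Finset.sum_mul, Finset.mul_sum, zero_mul, mul_zero,
          mul_assoc, h.sw, mul_one] at e1 e2
        have e3 := e1.trans e2.symm
        rw [add_right_inj] at e3
        refine sub_eq_zero.1 (ih (fun s => c s * (w s * x * star (w s))
          - w t * x * star (w t) * c s) (fun s => sub_mem (mul_mem (hcB s) (h.conj_mem s hx))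
            (mul_mem (h.conj_mem t hx) (hcB s))) ?_ s hs)
        simp only [sub_mul, Finset.sum_sub_distrib, mul_assoc, h.sw, mul_one]
        rw [e3, sub_self]
      have hc0 : ∀ s ∈ F, c s = 0 := fun s hs =>
        h.free (s := t) (t := s) (fun e => ht (e ▸ hs)) (hcB s) fun x hx => hcomm x hx s hs
      rw [Finset.sum_eq_zero (fun s hs => by rw [hc0 s hs, zero_mul]), add_zero] at hcs
      have h10 : (1 : R) = 0 := by rw [← h.sw t, hcs, mul_zero]
      exact hbt (by rw [← mul_one (b t), h10, mul_zero])
    rw [Finset.sum_insert ht, key, zero_mul, zero_add] at hsum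
    intro s hs
    rcases Finset.mem_insert.1 hs with rfl | hs
    · exact key
    · exact ih b hb hsum s hs

/-! ### The reduced twisted crossed product -/

variable [Fintype K] [DecidableEq K]

/-- The reduced twisted crossed product, realised in `M_K(R)` as the matrices whose `(s, t)` entry
depends only on `s * t⁻¹` and lies in the coset `B w (s * t⁻¹)`; such a matrix stands for
`∑ s, b s * w s ⊗ λ s`, with `λ` the left regular representation of `K`. -/
noncomputable def crossed (h : OuterAction B w) : StarSubalgebra ℂ (CStarMatrix K K R) where
  carrier := {X | (∀ s t r, X (s * r) (t * r) = X s t) ∧ ∀ s, X s 1 * star (w s) ∈ B}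
  mul_mem' := by
    rintro X Y ⟨hX, hX'⟩ ⟨hY, hY'⟩
    refine ⟨fun s t r => ?_, fun s => ?_⟩
    · simp only [CStarMatrix.mul_apply]
      rw [← Equiv.sum_comp (Equiv.mulRight r)]
      exact Finset.sum_congr rfl fun j _ => by
        rw [Equiv.coe_mulRight, hX, hY]
    · simp only [CStarMatrix.mul_apply, Finset.sum_mul]
      refine sum_mem fun j _ => ?_
      have e : X s j = X (s * j⁻¹) 1 := by
        rw [← hX s j j⁻¹, mul_inv_cancel]
      have := h.mul_coset (hX' (s * j⁻¹)) (hY' j)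
      rwa [inv_mul_cancel_right, ← e] at this
  add_mem' := by
    rintro X Y ⟨hX, hX'⟩ ⟨hY, hY'⟩
    refine ⟨fun s t r => ?_, fun s => ?_⟩
    · simp only [CStarMatrix.add_apply, hX, hY]
    · simp only [CStarMatrix.add_apply, add_mul]
      exact add_mem (hX' s) (hY' s)
  algebraMap_mem' c := by
    refine ⟨fun s t r => ?_, fun s => ?_⟩
    · simp only [CStarMatrix.algebraMap_apply, mul_left_inj]
    · rw [CStarMatrix.algebraMap_apply]
      split_ifs with hs
      · rw [hs, h.one, star_one, mul_one]
        exact B.algebraMap_mem c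
      · rw [zero_mul]
        exact B.zero_mem
  star_mem' := by
    rintro X ⟨hX, hX'⟩
    refine ⟨fun s t r => ?_, fun s => ?_⟩
    · simp only [CStarMatrix.star_apply, hX]
    · rw [CStarMatrix.star_apply]
      have e : X 1 s = X s⁻¹ 1 := by rw [← hX 1 s s⁻¹, one_mul, mul_inv_cancel]
      have := h.star_coset (hX' s⁻¹)
      rwa [inv_inv, ← e] at this

lemma entry_eq (h : OuterAction B w) (X : h.crossed) (s t : K) :
    (X : CStarMatrix K K R) s t = (X : CStarMatrix K K R) (s * t⁻¹) 1 := by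
  rw [← X.2.1 s t t⁻¹, mul_inv_cancel]

lemma isClosed_crossed (h : OuterAction B w) :
    IsClosed (h.crossed : Set (CStarMatrix K K R)) := by
  have hent : ∀ s t : K, Continuous fun X : CStarMatrix K K R => X s t := fun s t =>
    continuous_apply_apply (ρ := fun _ _ : K => R) s t
  have e : (h.crossed : Set (CStarMatrix K K R)) =
      (⋂ s, ⋂ t, ⋂ r, {X | X (s * r) (t * r) = X s t}) ∩ ⋂ s, {X | X s 1 * star (w s) ∈ B} := by
    ext X
    simp only [Set.mem_inter_iff, Set.mem_iInter, Set.mem_ofPred_eq]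
    rfl
  rw [e]
  refine IsClosed.inter (isClosed_iInter fun s => isClosed_iInter fun t => isClosed_iInter fun r =>
    isClosed_eq (hent _ _) (hent _ _)) (isClosed_iInter fun s => ?_)
  exact h.closed.preimage ((hent s 1).mul continuous_const)

/-- The canonical representation of the crossed product, sending the matrix that stands for
`∑ s, b s * w s ⊗ λ s` to `∑ s, b s * w s`. -/
noncomputable def rep (h : OuterAction B w) : h.crossed →⋆ₐ[ℂ] R where
  toFun X := ∑ s, (X : CStarMatrix K K R) s 1
  map_one' := by
    simp [CStarMatrix.one_apply]
  map_zero' := by simp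
  map_add' X Y := by
    simp [Finset.sum_add_distrib]
  map_mul' X Y := by
    simp only [MulMemClass.coe_mul, CStarMatrix.mul_apply]
    rw [Finset.sum_comm, Finset.mul_sum]
    refine Finset.sum_congr rfl fun j _ => ?_
    rw [← Finset.sum_mul]
    congr 1
    rw [← Equiv.sum_comp (Equiv.mulRight j⁻¹) (fun s => (X : CStarMatrix K K R) s 1)]
    exact Finset.sum_congr rfl fun s _ => h.entry_eq X s j
  commutes' c := by
    change ∑ s, (algebraMap ℂ (CStarMatrix K K R) c) s 1 = _
    simp [CStarMatrix.algebraMap_apply]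
  map_star' X := by
    change ∑ s, (star (X : CStarMatrix K K R)) s 1 = _
    simp only [CStarMatrix.star_apply, star_sum]
    rw [← Equiv.sum_comp (Equiv.inv K) (fun s => star ((X : CStarMatrix K K R) s 1))]
    refine Finset.sum_congr rfl fun s _ => ?_
    rw [h.entry_eq X 1 s, one_mul, Equiv.inv_apply]

lemma rep_injective (h : OuterAction B w) : Function.Injective h.rep := by
  rw [injective_iff_map_eq_zero]
  intro X hX
  have hX' : ∑ s, (X : CStarMatrix K K R) s 1 = 0 := hX
  have h0 := h.independent Finset.univ (fun s => (X : CStarMatrix K K R) s 1 * star (w s)) X.2.2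
    (by simpa only [mul_assoc, h.sw, mul_one] using hX')
  apply Subtype.ext
  apply CStarMatrix.ext
  intro s t
  rw [h.entry_eq]
  have := congrArg (· * w (s * t⁻¹)) (h0 (s * t⁻¹) (Finset.mem_univ _))
  simp only [mul_assoc, h.sw, mul_one, zero_mul] at this
  exact this

/-- The range of `rep` is closed, an injective *-homomorphism of C*-algebras being isometric. -/
lemma isClosed_range (h : OuterAction B w) : IsClosed (h.rep.range : Set R) := by
  have := h.isClosed_crossed
  have := (NonUnitalStarAlgHom.isometry h.rep h.rep_injective).isClosedEmbedding.isClosed_range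
  have e : (h.rep.range : Set R) = Set.range h.rep := by
    ext x
    rfl
  rw [e]
  exact this

/-- An element `x` of `B w s` is the image of the matrix standing for `x ⊗ λ s`. -/
lemma coset_mem_range (h : OuterAction B w) {x : R} {s : K} (hx : x * star (w s) ∈ B) :
    x ∈ h.rep.range := by
  refine ⟨⟨CStarMatrix.ofMatrix (Matrix.of fun i j => if i * j⁻¹ = s then x else 0), ⟨fun i j r => ?_,
    fun i => ?_⟩⟩, ?_⟩
  · simp only [CStarMatrix.ofMatrix_apply, Matrix.of_apply, mul_inv_rev, mul_assoc, mul_inv_cancel_left]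
  · simp only [CStarMatrix.ofMatrix_apply, Matrix.of_apply, inv_one, mul_one]
    split_ifs with hi
    · rwa [hi]
    · rw [zero_mul]; exact B.zero_mem
  · change ∑ i : K, (if i * (1 : K)⁻¹ = s then x else 0) = x
    simp

/-- Every element of `A = C*(B ∪ {w s})` has the form `∑ s, b s * w s` with `b s ∈ B`: these
elements form a *-algebra, closed because it is the range of `rep`. -/
lemma exists_expansion (h : OuterAction B w) {v : R}
    (hv : v ∈ (StarAlgebra.adjoin ℂ ((B : Set R) ∪ Set.range w)).topologicalClosure) :
    ∃ b : K → R, (∀ s, b s ∈ B) ∧ v = ∑ s, b s * w s := by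
  have hle : (StarAlgebra.adjoin ℂ ((B : Set R) ∪ Set.range w)).topologicalClosure
      ≤ h.rep.range := by
    refine StarSubalgebra.topologicalClosure_minimal ?_ h.isClosed_range
    refine StarAlgebra.adjoin_le ?_
    rintro x (hx | ⟨s, rfl⟩)
    · exact h.coset_mem_range (s := 1) (by rw [h.one, star_one, mul_one]; exact hx)
    · exact h.coset_mem_range (s := s) (by rw [h.ws]; exact B.one_mem)
  obtain ⟨X, hX⟩ := hle hv
  refine ⟨fun s => (X : CStarMatrix K K R) s 1 * star (w s), X.2.2, ?_⟩
  simp only [mul_assoc, h.sw, mul_one]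
  exact hX.symm

/-! ### Normalizers -/

/-- A unitary normalizer `v = ∑ s, b s * w s` has exactly one nonzero coefficient: each `b s`
intertwines `Ad (w s)` with `Ad v`, hence is a multiple of a unitary when nonzero, and two nonzero
coefficients would make `Ad (w s)` and `Ad (w t)` differ by an inner automorphism. -/
lemma normalizer_mem (h : OuterAction B w) {v : R}
    (hv : v ∈ (StarAlgebra.adjoin ℂ ((B : Set R) ∪ Set.range w)).topologicalClosure)
    (hvu : v ∈ unitary R) (hvB : (fun x => v * x * star v) '' (B : Set R) = B) :
    ∃ s, v * star (w s) ∈ B := by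
  rcases subsingleton_or_nontrivial R with _ | _
  · exact ⟨1, by rw [Subsingleton.elim (v * star (w 1)) 0]; exact B.zero_mem⟩
  obtain ⟨b, hb, hvb⟩ := h.exists_expansion hv
  have hvconj : ∀ x ∈ B, v * x * star v ∈ B := by
    intro x hx
    have : v * x * star v ∈ (fun x => v * x * star v) '' (B : Set R) := ⟨x, hx, rfl⟩
    rw [hvB] at this
    exact this
  have hcoef : ∀ x ∈ B, ∀ s, b s * (w s * x * star (w s)) = v * x * star v * b s := by
    intro x hx s
    refine sub_eq_zero.1 (h.independent Finset.univ (fun s => b s * (w s * x * star (w s))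
      - v * x * star v * b s) (fun s => sub_mem (mul_mem (hb s) (h.conj_mem s hx))
        (mul_mem (hvconj x hx) (hb s))) ?_ s (Finset.mem_univ s))
    have e1 : ∑ s, b s * w s * x = v * x := by rw [← Finset.sum_mul, ← hvb]
    have e2 : ∑ s, v * x * star v * (b s * w s) = v * x := by
      rw [← Finset.mul_sum, ← hvb, mul_assoc, Unitary.star_mul_self_of_mem hvu, mul_one]
    simp only [sub_mul, Finset.sum_sub_distrib]
    rw [sub_eq_zero]
    refine Eq.trans ?_ ((e1.trans e2.symm).trans ?_)
    · exact Finset.sum_congr rfl fun s _ => by simp only [mul_assoc, h.sw, mul_one]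
    · exact Finset.sum_congr rfl fun s _ => by simp only [mul_assoc]
  obtain ⟨s, hs⟩ : ∃ s, b s ≠ 0 := by
    by_contra! h0
    have hv0 : v = 0 := by rw [hvb]; simp [h0]
    have := Unitary.star_mul_self_of_mem hvu
    rw [hv0, mul_zero] at this
    exact zero_ne_one this
  obtain ⟨c, hcB, hcu⟩ := exists_unitary_of_intertwiner h.closed h.simple (h.image s) hvB
    (hb s) hs fun x hx => hcoef x hx s
  set u := c • b s with hu
  have hucoef : ∀ x ∈ B, u * (w s * x * star (w s)) = v * x * star v * u := by
    intro x hx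
    rw [hu, smul_mul_assoc, hcoef x hx s, mul_smul_comm]
  have hzero : ∀ t, t ≠ s → b t = 0 := by
    intro t hts
    -- `u* b t` intertwines `Ad (w t)` with `Ad (w s)`, since `u` intertwines `Ad (w s)` with `Ad v`.
    have h0 : star u * b t = 0 := h.free (Ne.symm hts) (mul_mem (star_mem hcB) (hb t)) (by
      intro x hx
      have e : star u * (v * x * star v) = w s * x * star (w s) * star u := by
        rw [← mul_one (star u * (v * x * star v)), ← Unitary.mul_star_self_of_mem hcu,
          ← mul_assoc, mul_assoc (star u), ← hucoef x hx, ← mul_assoc,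
          Unitary.star_mul_self_of_mem hcu, one_mul]
      rw [mul_assoc, hcoef x hx t, ← mul_assoc, e, mul_assoc])
    rw [← one_mul (b t), ← Unitary.mul_star_self_of_mem hcu, mul_assoc, h0, mul_zero]
  refine ⟨s, ?_⟩
  have hvs : v = b s * w s := by
    rw [hvb]
    exact Finset.sum_eq_single s (fun t _ hts => by rw [hzero t hts, zero_mul])
      (fun hn => absurd (Finset.mem_univ s) hn)
  rw [hvs, mul_assoc, h.ws, mul_one]
  exact hb s

end OuterAction

/-- for a simple unital C*-subalgebra `B ⊆ B(H)`, a finite group `K`, and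
unitaries `w : K → U(B(H))` with `w_e = 1` implementing a cocycle action on `B`
(`σ(s,t) = w_s w_t w_{st}*` a unitary of `B`, `w_s B w_s* = B`, and `Ad(w_s)|_B` outer
for `s ≠ e`), the Weyl group `W₀(B ⊂ A) = N_A(B)/U(B)` of
`A := C*(B ∪ {w_s}) = B ⋊^r_{(α,σ)} K` is isomorphic to `K` via `s ↦ [w_s]`. -/
theorem Weyl_group_of_reduced_twisted_crossed_product
    (H : Type*) [NormedAddCommGroup H] [InnerProductSpace ℂ H] [CompleteSpace H]
    (B : StarSubalgebra ℂ (H →L[ℂ] H))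
    (hBclosed : IsClosed (B : Set (H →L[ℂ] H)))
    (hBsimple : IsSimpleCStar (B : Set (H →L[ℂ] H)))
    (K : Type*) [Group K] [Fintype K]
    (w : K → (H →L[ℂ] H)) (hw1 : w 1 = 1)
    (hwu : ∀ s, w s ∈ unitary (H →L[ℂ] H))
    (hσ : ∀ s t, w s * w t * star (w (s * t)) ∈ (B : Set (H →L[ℂ] H)) ∧
      w s * w t * star (w (s * t)) ∈ unitary (H →L[ℂ] H))
    (hwB : ∀ s, (fun x => w s * x * star (w s)) '' (B : Set (H →L[ℂ] H))
      = (B : Set (H →L[ℂ] H)))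
    (houter : ∀ s : K, s ≠ 1 →
      ¬ ∃ u, u ∈ (B : Set (H →L[ℂ] H)) ∧ u ∈ unitary (H →L[ℂ] H) ∧
        ∀ x ∈ (B : Set (H →L[ℂ] H)), w s * x * star (w s) = u * x * star u) :
    (∀ s, w s ∈ normalizerIn
        (((StarAlgebra.adjoin ℂ ((B : Set (H →L[ℂ] H)) ∪ Set.range w)).topologicalClosure :
          StarSubalgebra ℂ (H →L[ℂ] H)) : Set (H →L[ℂ] H)) (B : Set (H →L[ℂ] H))) ∧
    (∀ s t, w s * w t * star (w (s * t)) ∈ UB (B : Set (H →L[ℂ] H))) ∧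
    (∀ s t : K, s ≠ t → w s * star (w t) ∉ UB (B : Set (H →L[ℂ] H))) ∧
    (∀ v ∈ normalizerIn
        (((StarAlgebra.adjoin ℂ ((B : Set (H →L[ℂ] H)) ∪ Set.range w)).topologicalClosure :
          StarSubalgebra ℂ (H →L[ℂ] H)) : Set (H →L[ℂ] H)) (B : Set (H →L[ℂ] H)),
      ∃ s, v * star (w s) ∈ UB (B : Set (H →L[ℂ] H))) := by
  classical
  have h : OuterAction B w := ⟨hBclosed, hBsimple, hw1, hwu, fun s t => (hσ s t).1, hwB, houter⟩
  refine ⟨fun s => ⟨?_, hwu s, hwB s⟩, hσ, fun s t hst hu => ?_, ?_⟩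
  · exact subset_closure (StarAlgebra.subset_adjoin ℂ _ (Or.inr ⟨s, rfl⟩))
  · refine h.not_inner hst hu.1 hu.2 fun x _ => ?_
    simp only [mul_assoc, h.sw_assoc]
  · rintro v ⟨hv, hvu, hvB⟩
    obtain ⟨s, hs⟩ := h.normalizer_mem hv hvu hvB
    exact ⟨s, hs, mul_mem hvu (Unitary.star_mem (hwu s))⟩

end RegularInclusion
end
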